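/- arXiv:1512.07714 — 4 statements merged into one kernel-verified Lean document; each statement's English description precedes it below -/
import Mathlib

section
/- Let X be a locally compact Hausdorff space, F a complex Banach space, and P : C₀(X) → F a bounded orthogonally additive n-homogeneous polynomial. Then there exists a bounded linear operator T : C₀(X) → F such that P(f) = T(fⁿ) for all f ∈ C₀(X). -/
open scoped ZeroAtInfty

/-- `P : E → F` is a bounded `n`-homogeneous polynomial: `P x = L(x,…,x)` for a bounded
symmetric `n`-linear map `L`. -/
def IsHomogPolynomial {E F : Type*} [NormedAddCommGroup E] [NormedSpace ℂ E]
    [NormedAddCommGroup F] [NormedSpace ℂ F] (n : ℕ) (P : E → F) : Prop :=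
  ∃ L : ContinuousMultilinearMap ℂ (fun _ : Fin n => E) F,
    (∀ (v : Fin n → E) (σ : Equiv.Perm (Fin n)), (L fun i => v (σ i)) = L v) ∧
    ∀ x : E, P x = L fun _ => x

/-!
Polarization upgrades orthogonal additivity of `f ↦ L (f, …, f)` to the vanishing of `L` whenever
its arguments split into two nonempty groups that are mutually orthogonal. Cutting the remaining
arguments along level sets of one function, and using continuity, `L` then vanishes as soon as just
two of its arguments are orthogonal.

For a bounded biadditive `β` on real bounded continuous functions that vanishes on orthogonal pairs,
write `u ≥ 0` as a sum of layers `r₁, …, r_N` of height one. Only the overlap of consecutive layers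
contributes to `β (r_k, 1 - r_k)`, and averaging over signs bounds the sum of these contributions
independently of `N`. Hence `β (u, 1) - β (1, u)` stays bounded when `u` is scaled up, so it is
zero: a bounded multiplier may be moved from one argument of `L` to another.

Finally, finitely many functions in `C₀(X)` have the form `a_k * w ^ n` with a common `w` and
bounded continuous `a_k`. Moving all the `a_k` into a single argument shows that `L (f₁, …, f_n)`
depends only on the product of the `f_i`, and the same factorization makes this dependence linear
and bounded.
-/

open scoped BoundedContinuousFunction Nat
open Finset (univ)

section Polarization

variable {ι : Type*} [Fintype ι]

theorem card_filter_bijective [DecidableEq ι] :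
    (univ.filter fun r : ι → ι => Function.Bijective r).card = (Fintype.card ι)! := by
  rw [← Fintype.card_subtype, Fintype.card_congr Equiv.bijectiveEquiv, Fintype.card_perm]

theorem sum_neg_one_pow_card_compl_of_range_subset [DecidableEq ι] (r : ι → ι) :
    ∑ S : Finset ι with ∀ k, r k ∈ S, (-1 : ℤ) ^ Sᶜ.card =
      if Function.Bijective r then 1 else 0 := by
  have bijective_iff : (univ.image r)ᶜ = ∅ ↔ Function.Bijective r := by
    rw [Finset.compl_eq_empty_iff, ← Finite.surjective_iff_bijective,
      Finset.eq_univ_iff_forall]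
    simp only [Finset.mem_image, Finset.mem_univ, true_and, Function.Surjective]
  calc
    _ = ∑ T ∈ (univ.image r)ᶜ.powerset, (-1 : ℤ) ^ T.card := by
      refine Finset.sum_nbij' compl compl (fun S hS => ?_) (fun T hT => ?_) ?_ ?_ ?_
      · have hS' : univ.image r ⊆ S := Finset.image_subset_iff.2 fun k _ => by simp_all
        simpa using hS'
      · have hT' : univ.image r ⊆ Tᶜ := Finset.subset_compl_comm.1 (by simpa using hT)
        simpa [Finset.image_subset_iff] using hT'
      all_goals simp
    _ = _ := by simp only [Finset.sum_powerset_neg_one_pow_card, bijective_iff]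

variable {R E F : Type*} [CommSemiring R] [AddCommMonoid E] [AddCommGroup F] [Module R E]
  [Module R F]

theorem sum_neg_one_pow_card_compl_smul_map_sum [DecidableEq ι]
    (L : MultilinearMap R (fun _ : ι => E) F)
    (hsymm : ∀ (v : ι → E) (σ : Equiv.Perm ι), (L fun i => v (σ i)) = L v) (f : ι → E) :
    ∑ S : Finset ι, (-1 : ℤ) ^ Sᶜ.card • L (fun _ => ∑ i ∈ S, f i) =
      (Fintype.card ι)! • L f := by
  have expand (S : Finset ι) : L (fun _ => ∑ i ∈ S, f i) =
      ∑ r : ι → ι with ∀ k, r k ∈ S, L fun k => f (r k) := by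
    rw [L.map_sum_finset (fun _ i => f i) fun _ => S]
    congr 1
    ext r
    simp
  calc
    _ = ∑ r : ι → ι, (∑ S : Finset ι with ∀ k, r k ∈ S, (-1 : ℤ) ^ Sᶜ.card) •
          L fun k => f (r k) := by
      simp only [expand, Finset.sum_filter, Finset.smul_sum, Finset.sum_smul, ite_smul, smul_ite,
        smul_zero, zero_smul]
      exact Finset.sum_comm
    _ = ∑ r : ι → ι with Function.Bijective r, L fun k => f (r k) := by
      simp only [sum_neg_one_pow_card_compl_of_range_subset, ite_smul, one_smul, zero_smul,
        ← Finset.sum_filter]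
    _ = ∑ r : ι → ι with Function.Bijective r, L f :=
      Finset.sum_congr rfl fun r hr =>
        hsymm f (Equiv.ofBijective r (Finset.mem_filter.1 hr).2)
    _ = _ := by rw [Finset.sum_const, card_filter_bijective]

end Polarization

section OrthogonallyAdditive

variable {ι R E F : Type*} [Finite ι] [CommSemiring R] [NonUnitalNonAssocSemiring E]
  [AddCommGroup F] [IsAddTorsionFree F] [Module R E] [Module R F]
  {L : MultilinearMap R (fun _ : ι => E) F}
    (hsymm : ∀ (v : ι → E) (σ : Equiv.Perm ι), (L fun i => v (σ i)) = L v)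
    (horth : ∀ f g : E, f * g = 0 → L (fun _ => f + g) = L (fun _ => f) + L fun _ => g)

include hsymm horth

theorem map_add_of_pairwise_mul_eq_zero {g h : ι → E} (hgh : ∀ i j, g i * h j = 0) :
    L (g + h) = L g + L h := by
  cases nonempty_fintype ι
  have diagonal (S : Finset ι) : L (fun _ => ∑ i ∈ S, (g + h) i) =
      L (fun _ => ∑ i ∈ S, g i) + L fun _ => ∑ i ∈ S, h i := by
    simp only [Pi.add_apply, Finset.sum_add_distrib]
    refine horth _ _ ?_
    simp only [Finset.sum_mul_sum, hgh, Finset.sum_const_zero]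
  classical
  refine nsmul_right_injective (Fintype.card ι).factorial_ne_zero ?_
  simp only [smul_add, ← sum_neg_one_pow_card_compl_smul_map_sum L hsymm, diagonal,
    Finset.sum_add_distrib]

theorem map_eq_zero_of_orthogonal_split {f : ι → E} {A : Set ι} {i₀ j₀ : ι} (hi₀ : i₀ ∈ A)
    (hj₀ : j₀ ∉ A) (hA : ∀ i ∈ A, ∀ j ∉ A, f i * f j = 0) : L f = 0 := by
  classical
  have hgh (i j : ι) : A.piecewise f 0 i * A.piecewise (0 : ι → E) f j = 0 := by
    by_cases hi : i ∈ A <;> by_cases hj : j ∈ A <;> simp [hi, hj, hA]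
  have hf : f = A.piecewise f 0 + A.piecewise (0 : ι → E) f := by
    ext i
    by_cases hi : i ∈ A <;> simp [hi]
  rw [hf, map_add_of_pairwise_mul_eq_zero hsymm horth hgh,
    L.map_coord_zero j₀ (by simp [hj₀]), L.map_coord_zero i₀ (by simp [hi₀]), add_zero]

end OrthogonallyAdditive

section BoundedMultiplication

variable {X 𝕜 : Type*} [TopologicalSpace X] [RCLike 𝕜]

theorem norm_apply_le (f : C₀(X, 𝕜)) (x : X) : ‖f x‖ ≤ ‖f‖ :=
  f.toBCF.norm_coe_le_norm x

theorem norm_le_of_forall {f : C₀(X, 𝕜)} {C : ℝ} (hC : 0 ≤ C) (h : ∀ x, ‖f x‖ ≤ C) : ‖f‖ ≤ C :=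
  (BoundedContinuousFunction.norm_le (f := f.toBCF) hC).2 h

/-- The action of bounded continuous functions on `C₀(X, 𝕜)` by pointwise multiplication, as a
continuous linear map in the bounded factor: `bddMul f a = a * f`. -/
noncomputable def bddMul (f : C₀(X, 𝕜)) : (X →ᵇ 𝕜) →L[𝕜] C₀(X, 𝕜) :=
  LinearMap.mkContinuous
    { toFun a :=
        { toFun x := a x * f x
          continuous_toFun := a.continuous.mul f.continuous
          zero_at_infty' := by
            refine squeeze_zero_norm (fun x => ?_)
              (by simpa using (zero_at_infty f).norm.const_mul ‖a‖)
            rw [norm_mul]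
            gcongr
            exact a.norm_coe_le_norm x }
      map_add' a b := by ext x; simp [add_mul]
      map_smul' c a := by ext x; simp [mul_assoc] }
    ‖f‖ fun a => norm_le_of_forall (by positivity) fun x => by
      rw [mul_comm]
      exact (norm_mul_le (a x) (f x)).trans
        (mul_le_mul (a.norm_coe_le_norm x) (norm_apply_le f x) (norm_nonneg _) (norm_nonneg _))

@[simp]
theorem bddMul_apply (f : C₀(X, 𝕜)) (a : X →ᵇ 𝕜) (x : X) : bddMul f a x = a x * f x := rfl

theorem bddMul_one (f : C₀(X, 𝕜)) : bddMul f 1 = f := by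
  ext x
  simp

theorem norm_bddMul_le (f : C₀(X, 𝕜)) (a : X →ᵇ 𝕜) : ‖bddMul f a‖ ≤ ‖f‖ * ‖a‖ :=
  (bddMul f).le_of_opNorm_le (LinearMap.mkContinuous_norm_le _ (norm_nonneg f) _) a

variable (𝕜) in
/-- Real-valued bounded continuous functions regarded as `𝕜`-valued ones. -/
noncomputable abbrev ofRealBCF : (X →ᵇ ℝ) →L[ℝ] (X →ᵇ 𝕜) :=
  (RCLike.ofRealCLM (K := 𝕜)).compLeftContinuousBounded X

theorem norm_ofRealBCF_le (a : X →ᵇ ℝ) : ‖ofRealBCF 𝕜 a‖ ≤ ‖a‖ :=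
  (BoundedContinuousFunction.norm_le (norm_nonneg a)).2 fun x => by
    exact (RCLike.norm_ofReal (a x)).trans_le (a.norm_coe_le_norm x)

end BoundedMultiplication

section Ramp

variable {X : Type*} [TopologicalSpace X]

/-- The cutoff that is `0` where `u ≤ a`, is `1` where `b ≤ u`, and is affine in `u` between. -/
noncomputable def ramp (u : C(X, ℝ)) (a b : ℝ) : X →ᵇ ℝ :=
  .ofNormedAddCommGroup (fun x => max 0 (min 1 ((u x - a) / (b - a)))) (by fun_prop) 1 fun x => by
    rw [Real.norm_of_nonneg (le_max_left _ _)]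
    exact max_le zero_le_one (min_le_left _ _)

theorem ramp_apply (u : C(X, ℝ)) (a b : ℝ) (x : X) :
    ramp u a b x = max 0 (min 1 ((u x - a) / (b - a))) := rfl

theorem ramp_nonneg (u : C(X, ℝ)) (a b : ℝ) (x : X) : 0 ≤ ramp u a b x := le_max_left _ _

theorem ramp_le_one (u : C(X, ℝ)) (a b : ℝ) (x : X) : ramp u a b x ≤ 1 :=
  max_le zero_le_one (min_le_left _ _)

theorem ramp_eq_zero {u : C(X, ℝ)} {a b : ℝ} {x : X} (hab : a < b) (hx : u x ≤ a) :
    ramp u a b x = 0 :=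
  max_eq_left ((min_le_right _ _).trans
    (div_nonpos_of_nonpos_of_nonneg (sub_nonpos.2 hx) (sub_pos.2 hab).le))

theorem ramp_eq_one {u : C(X, ℝ)} {a b : ℝ} {x : X} (hab : a < b) (hx : b ≤ u x) :
    ramp u a b x = 1 := by
  have : 1 ≤ (u x - a) / (b - a) := (one_le_div (sub_pos.2 hab)).2 (by linarith)
  rw [ramp_apply, min_eq_left this, max_eq_right zero_le_one]

end Ramp

/-- A function of several variables in an algebra is orthosymmetric if it vanishes as soon as two
of its arguments, in distinct positions, have product zero. -/
def IsOrthosymmetric {ι A F : Type*} [Mul A] [Zero A] [Zero F] (L : (ι → A) → F) : Prop :=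
  ∀ (f : ι → A) (i j : ι), i ≠ j → f i * f j = 0 → L f = 0

section Orthosymmetric

variable {X 𝕜 F ι : Type*} [TopologicalSpace X] [RCLike 𝕜] [NormedAddCommGroup F]
  [NormedSpace 𝕜 F] [Finite ι]

section

variable {L : MultilinearMap 𝕜 (fun _ : ι => C₀(X, 𝕜)) F}
    (hsymm : ∀ (v : ι → C₀(X, 𝕜)) (σ : Equiv.Perm ι), (L fun i => v (σ i)) = L v)
    (horth : ∀ f g : C₀(X, 𝕜), f * g = 0 → L (fun _ => f + g) = L (fun _ => f) + L fun _ => g)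

include hsymm horth

theorem map_eq_zero_of_separated (u : X → ℝ) {a b : ℝ} (hab : a < b) {f : ι → C₀(X, 𝕜)} {i₀ j₀ : ι}
    (hi₀ : ∀ x, u x < b → f i₀ x = 0) (hj₀ : ∀ x, a < u x → f j₀ x = 0)
    (hf : ∀ i, (∀ x, u x < b → f i x = 0) ∨ ∀ x, a < u x → f i x = 0) : L f = 0 := by
  let high : Set ι := {i | ∀ x, u x < b → f i x = 0}
  by_cases hj₀' : j₀ ∈ high
  · refine L.map_coord_zero j₀ (ZeroAtInftyContinuousMap.ext fun x => ?_)
    rcases lt_or_ge (u x) b with hx | hx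
    · exact hj₀' x hx
    · exact hj₀ x (hab.trans_le hx)
  · have : IsAddTorsionFree F := .of_isTorsionFree 𝕜 F
    refine map_eq_zero_of_orthogonal_split hsymm horth (A := high) hi₀ hj₀' fun i hi j hj => ?_
    ext x
    rcases lt_or_ge (u x) b with hx | hx
    · simp [hi x hx]
    · simp [(hf j).resolve_left hj x (hab.trans_le hx)]

theorem map_eq_zero_of_separated_outside (u : C(X, ℝ)) {i₀ j₀ : ι} (U : Finset ι)
    (hi₀U : i₀ ∉ U) (hj₀U : j₀ ∉ U) {a b : ℝ} (hab : a < b) {f : ι → C₀(X, 𝕜)}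
    (hi₀ : ∀ x, u x < b → f i₀ x = 0) (hj₀ : ∀ x, a < u x → f j₀ x = 0)
    (hf : ∀ i ∉ U, (∀ x, u x < b → f i x = 0) ∨ ∀ x, a < u x → f i x = 0) : L f = 0 := by
  classical
  induction U using Finset.induction_on generalizing a b f with
  | empty =>
    exact map_eq_zero_of_separated hsymm horth u hab hi₀ hj₀ fun i => hf i (Finset.notMem_empty i)
  | insert k U hk ih =>
    rw [Finset.mem_insert, not_or] at hi₀U hj₀U
    have vanishes {a' b' : ℝ} (hab' : a' < b') (ha' : a ≤ a') (hb' : b' ≤ b) {q : C₀(X, 𝕜)}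
        (hq : (∀ x, u x < b' → q x = 0) ∨ ∀ x, a' < u x → q x = 0) :
        L (Function.update f k q) = 0 := by
      refine ih hi₀U.2 hj₀U.2 hab' ?_ ?_ fun i hi => ?_
      · rw [Function.update_of_ne hi₀U.1]
        exact fun x hx => hi₀ x (hx.trans_le hb')
      · rw [Function.update_of_ne hj₀U.1]
        exact fun x hx => hj₀ x (ha'.trans_lt hx)
      · obtain rfl | hik := eq_or_ne i k
        · rwa [Function.update_self]
        · rw [Function.update_of_ne hik]
          exact (hf i (by simp [hik, hi])).imp (fun h x hx => h x (hx.trans_le hb'))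
            fun h x hx => h x (ha'.trans_lt hx)
    -- Both pieces of `f k` are separated again, across the narrower gaps `(a, c)` and `(d, b)`.
    obtain ⟨c, hac, hcb⟩ := exists_between hab
    obtain ⟨d, hcd, hdb⟩ := exists_between hcb
    let p : X →ᵇ 𝕜 := ofRealBCF 𝕜 (ramp u c d)
    have split : f k = bddMul (f k) p + bddMul (f k) (1 - p) := by
      rw [← map_add, add_sub_cancel]
      ext x
      simp
    rw [← Function.update_eq_self k f, split, L.map_update_add,
      vanishes hac le_rfl hcb.le (.inl fun x hx => by simp [p, ramp_eq_zero hcd hx.le]),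
      vanishes hdb (hac.trans hcd).le le_rfl (.inr fun x hx => by simp [p, ramp_eq_one hcd hx.le]),
      add_zero]

end

theorem norm_sub_bddMul_ramp_le (f : C₀(X, 𝕜)) {a b : ℝ} (hab : a < b) (hb : 0 ≤ b) :
    ‖f - bddMul f (ofRealBCF 𝕜 (ramp ⟨fun x => ‖f x‖, f.continuous.norm⟩ a b))‖ ≤ b := by
  refine norm_le_of_forall hb fun x => ?_
  set u : C(X, ℝ) := ⟨fun x => ‖f x‖, f.continuous.norm⟩
  have hnorm : ‖f x - (ramp u a b x : 𝕜) * f x‖ = (1 - ramp u a b x) * ‖f x‖ := by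
    rw [← one_sub_mul, norm_mul, ← RCLike.ofReal_one, ← RCLike.ofReal_sub, RCLike.norm_ofReal,
      abs_of_nonneg (sub_nonneg.2 (ramp_le_one u a b x))]
  refine hnorm.trans_le ?_
  rcases le_total b ‖f x‖ with hx | hx
  · rwa [ramp_eq_one (u := u) hab hx, sub_self, zero_mul]
  · exact (mul_le_of_le_one_left (norm_nonneg _)
      (sub_le_self _ (ramp_nonneg u a b x))).trans hx

theorem isOrthosymmetric_of_orthogonally_additive
    {L : ContinuousMultilinearMap 𝕜 (fun _ : ι => C₀(X, 𝕜)) F}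
    (hsymm : ∀ (v : ι → C₀(X, 𝕜)) (σ : Equiv.Perm ι), (L fun i => v (σ i)) = L v)
    (horth : ∀ f g : C₀(X, 𝕜), f * g = 0 → L (fun _ => f + g) = L (fun _ => f) + L fun _ => g) :
    IsOrthosymmetric L := by
  classical
  cases nonempty_fintype ι
  intro f i j hij hfij
  let u : C(X, ℝ) := ⟨fun x => ‖f i x‖, (f i).continuous.norm⟩
  have hj (x : X) (hx : 0 < u x) : f j x = 0 :=
    (mul_eq_zero.1 (DFunLike.congr_fun hfij x)).resolve_left (norm_pos_iff.1 hx)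
  have cutoff_eq_zero {ε : ℝ} (hε : 0 < ε) :
      L (Function.update f i (bddMul (f i) (ofRealBCF 𝕜 (ramp u ε (2 * ε))))) = 0 := by
    have cutoff_apply (x : X) (hx : u x < ε) :
        bddMul (f i) (ofRealBCF 𝕜 (ramp u ε (2 * ε))) x = 0 := by
      simp [ramp_eq_zero (show ε < 2 * ε by linarith) hx.le]
    refine map_eq_zero_of_separated_outside (L := L.toMultilinearMap) (i₀ := i) (j₀ := j) hsymm
      horth u (univ \ {i, j}) (by simp) (by simp) hε ?_ ?_ fun k hk => ?_
    · simpa using cutoff_apply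
    · simpa [hij.symm] using hj
    · obtain rfl | rfl : k = i ∨ k = j := by simpa [or_iff_not_imp_left] using hk
      · exact .inl (by simpa using cutoff_apply)
      · exact .inr (by simpa [hij.symm] using hj)
  have approx : f i ∈ closure {g | L.toContinuousLinearMap f i g = 0} :=
    Metric.mem_closure_iff.2 fun ε hε => ⟨_, cutoff_eq_zero (show 0 < ε / 4 by linarith), by
      rw [dist_eq_norm]
      exact (norm_sub_bddMul_ramp_le (f i) (by linarith) (by linarith)).trans_lt (by linarith)⟩
  have closed : IsClosed {g | L.toContinuousLinearMap f i g = 0} :=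
    isClosed_eq (L.toContinuousLinearMap f i).continuous continuous_const
  simpa using closed.closure_subset approx

end Orthosymmetric

section Layers

variable {X F : Type*} [TopologicalSpace X] [NormedAddCommGroup F]

theorem map_one_sub_eq_map_sub_sub {A : Type*} [CommRing A] {β : A →+ A →+ F}
    (h0 : ∀ a b, a * b = 0 → β a b = 0) {r₀ r₁ r₂ : A} (h₁₀ : r₁ * r₀ = r₁) (h₂₁ : r₂ * r₁ = r₂) :
    β r₁ (1 - r₁) = β (r₁ - r₂) (r₀ - r₁) := by
  have high : β r₂ (1 - r₁) = 0 := h0 _ _ (by rw [mul_one_sub, h₂₁, sub_self])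
  have low : β (r₁ - r₂) (1 - r₀) = 0 :=
    h0 _ _ (by linear_combination (r₂ - 1) * h₁₀ + (1 - r₀) * h₂₁)
  calc
    β r₁ (1 - r₁) = β (r₁ - r₂) (1 - r₁) := by
      rw [map_sub β, AddMonoidHom.sub_apply, high, sub_zero]
    _ = β (r₁ - r₂) (r₀ - r₁ + (1 - r₀)) := by rw [add_comm, sub_add_sub_cancel]
    _ = β (r₁ - r₂) (r₀ - r₁) := by rw [map_add, low, add_zero]

variable [NormedSpace ℝ F] {β : (X →ᵇ ℝ) →+ (X →ᵇ ℝ) →+ F} {C : ℝ}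

-- The midpoint of `β (a₀ ± a k) (b₀ ± b k)` is `β a₀ b₀ + β (a k) (b k)`, so summands can be
-- absorbed into `a₀` and `b₀` one at a time; this is why `a₀` and `b₀` are there.
theorem norm_map_add_sum_map_le (hC : ∀ a b, ‖a‖ ≤ 1 → ‖b‖ ≤ 1 → ‖β a b‖ ≤ C) {κ : Type*}
    (s : Finset κ) (a b : κ → X →ᵇ ℝ) (a₀ b₀ : X →ᵇ ℝ)
    (ha : ∀ x, |a₀ x| + ∑ k ∈ s, |a k x| ≤ 1) (hb : ∀ x, |b₀ x| + ∑ k ∈ s, |b k x| ≤ 1) :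
    ‖β a₀ b₀ + ∑ k ∈ s, β (a k) (b k)‖ ≤ C := by
  classical
  induction s using Finset.induction_on generalizing a₀ b₀ with
  | empty =>
    have norm_le_one {c : X →ᵇ ℝ} (hc : ∀ x, |c x| ≤ 1) : ‖c‖ ≤ 1 :=
      (BoundedContinuousFunction.norm_le zero_le_one).2 hc
    simpa using hC a₀ b₀ (norm_le_one (by simpa using ha)) (norm_le_one (by simpa using hb))
  | insert k s hk ih =>
    simp only [Finset.sum_insert hk] at ha hb ⊢
    have abs_add_sub_le {t : ℝ} {c d : X →ᵇ ℝ} {x : X} (h : |c x| + (|d x| + t) ≤ 1) :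
        |(c + d) x| + t ≤ 1 ∧ |(c - d) x| + t ≤ 1 := by
      simp only [BoundedContinuousFunction.add_apply, BoundedContinuousFunction.sub_apply]
      constructor <;> linarith [abs_add_le (c x) (d x), abs_sub (c x) (d x)]
    set σ := ∑ k ∈ s, β (a k) (b k)
    have plus : ‖β (a₀ + a k) (b₀ + b k) + σ‖ ≤ C :=
      ih _ _ (fun x => (abs_add_sub_le (ha x)).1) fun x => (abs_add_sub_le (hb x)).1
    have minus : ‖β (a₀ - a k) (b₀ - b k) + σ‖ ≤ C :=
      ih _ _ (fun x => (abs_add_sub_le (ha x)).2) fun x => (abs_add_sub_le (hb x)).2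
    have average : 2 • (β a₀ b₀ + (β (a k) (b k) + σ)) =
        (β (a₀ + a k) (b₀ + b k) + σ) + (β (a₀ - a k) (b₀ - b k) + σ) := by
      simp only [map_add, map_sub, AddMonoidHom.add_apply, AddMonoidHom.sub_apply]
      abel
    have norm_double := norm_add_le_of_le plus minus
    rw [← average, RCLike.norm_nsmul ℝ, two_nsmul] at norm_double
    linarith

theorem norm_sum_map_one_sub_le (hC : ∀ a b, ‖a‖ ≤ 1 → ‖b‖ ≤ 1 → ‖β a b‖ ≤ C)
    (h0 : ∀ a b, a * b = 0 → β a b = 0) {r : ℕ → X →ᵇ ℝ} (hr : ∀ k x, r k x ∈ Set.Icc 0 1)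
    (hmul : ∀ k, r (k + 1) * r k = r (k + 1)) (N : ℕ) :
    ‖∑ k ∈ Finset.range N, β (r (k + 1)) (1 - r (k + 1))‖ ≤ C := by
  have decreasing (k : ℕ) (x : X) : r (k + 1) x ≤ r k x := by
    rw [← hmul k]
    exact mul_le_of_le_one_left (hr k x).1 (hr (k + 1) x).2
  have sum_abs_le (m : ℕ) (x : X) :
      ∑ k ∈ Finset.range N, |(r (m + k) - r (m + (k + 1))) x| ≤ 1 := by
    calc
      _ = ∑ k ∈ Finset.range N, (r (m + k) x - r (m + (k + 1)) x) :=
        Finset.sum_congr rfl fun k _ => abs_of_nonneg (sub_nonneg.2 (decreasing (m + k) x))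
      _ = r m x - r (m + N) x := Finset.sum_range_sub' (fun k => r (m + k) x) N
      _ ≤ 1 := by linarith [(hr m x).2, (hr (m + N) x).1]
  have key := norm_map_add_sum_map_le hC (Finset.range N)
    (fun k => r (1 + k) - r (1 + (k + 1))) (fun k => r (0 + k) - r (0 + (k + 1))) 0 0
    (fun x => by simpa using sum_abs_le 1 x) (fun x => by simpa using sum_abs_le 0 x)
  simpa only [map_zero, zero_add, add_comm 1, ← map_one_sub_eq_map_sub_sub h0 (hmul _) (hmul _)]
    using key

theorem sum_range_max_zero_min_one_sub {y : ℝ} (hy : 0 ≤ y) (N : ℕ) :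
    ∑ k ∈ Finset.range N, max 0 (min 1 (y - k)) = min y N := by
  induction N with
  | zero => simp [hy]
  | succ N ih =>
    rw [Finset.sum_range_succ, ih, Nat.cast_succ]
    grind

theorem norm_map_one_sub_map_one_le (hC : ∀ a b, ‖a‖ ≤ 1 → ‖b‖ ≤ 1 → ‖β a b‖ ≤ C)
    (h0 : ∀ a b, a * b = 0 → β a b = 0) {u : X →ᵇ ℝ} (hu : 0 ≤ u) :
    ‖β u 1 - β 1 u‖ ≤ C + C := by
  obtain ⟨N, hN⟩ := exists_nat_ge ‖u‖
  let r (k : ℕ) : X →ᵇ ℝ := ramp u (k - 1) k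
  have r_mem (k : ℕ) (x : X) : r k x ∈ Set.Icc 0 1 := ⟨ramp_nonneg .., ramp_le_one ..⟩
  have r_mul (k : ℕ) : r (k + 1) * r k = r (k + 1) := by
    ext x
    rcases le_total (u x) k with hx | hx
    · simp [r, ramp_eq_zero (u := (u : C(X, ℝ))) (show (k : ℝ) < k + 1 by linarith) hx]
    · simp [r, ramp_eq_one (u := (u : C(X, ℝ))) (show (k : ℝ) - 1 < k by linarith) hx]
  have u_eq : u = ∑ k ∈ Finset.range N, r (k + 1) := by
    ext x
    have hux₀ : 0 ≤ u x := hu x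
    have huxN : u x ≤ N := ((le_abs_self _).trans (u.norm_coe_le_norm x)).trans hN
    simp [r, ramp_apply, sum_range_max_zero_min_one_sub hux₀, huxN]
  have flip0 (a b : X →ᵇ ℝ) (hab : a * b = 0) : β.flip a b = 0 := h0 b a (by rwa [mul_comm])
  have split : β u 1 - β 1 u = ∑ k ∈ Finset.range N, β (r (k + 1)) (1 - r (k + 1)) -
      ∑ k ∈ Finset.range N, β.flip (r (k + 1)) (1 - r (k + 1)) := by
    conv_lhs => rw [u_eq]
    simp only [map_sum, map_sub, AddMonoidHom.finsetSum_apply,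
      AddMonoidHom.flip_apply, Finset.sum_sub_distrib]
    abel
  rw [split]
  exact norm_sub_le_of_le (norm_sum_map_one_sub_le hC h0 r_mem r_mul N)
    (norm_sum_map_one_sub_le (fun a b ha hb => hC b a hb ha) flip0 r_mem r_mul N)

theorem map_one_right_eq_map_one_left (hC : ∀ a b, ‖a‖ ≤ 1 → ‖b‖ ≤ 1 → ‖β a b‖ ≤ C)
    (h0 : ∀ a b, a * b = 0 → β a b = 0) (u : X →ᵇ ℝ) : β u 1 = β 1 u := by
  have of_nonneg {v : X →ᵇ ℝ} (hv : 0 ≤ v) : β v 1 = β 1 v := by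
    by_contra hne
    obtain ⟨m, hm⟩ := exists_lt_nsmul (norm_sub_pos_iff.2 hne) (C + C)
    have := norm_map_one_sub_map_one_le hC h0 (nsmul_nonneg hv m)
    rw [map_nsmul, map_nsmul, AddMonoidHom.nsmul_apply, ← nsmul_sub, RCLike.norm_nsmul ℝ] at this
    exact this.not_gt hm
  rw [← posPart_sub_negPart u, map_sub, map_sub, AddMonoidHom.sub_apply,
    of_nonneg (posPart_nonneg u), of_nonneg (negPart_nonneg u)]

end Layers

section MultiplicationInOneVariable

variable {ι : Type*} [DecidableEq ι]

theorem map_eq_map_mulSingle_prod {A F : Type*} [Fintype ι] [CommMonoid A] {M : (ι → A) → F}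
    (balance : ∀ a u i j, M (a * Pi.mulSingle i u) = M (a * Pi.mulSingle j u)) (i₀ : ι)
    (a : ι → A) : M a = M (Pi.mulSingle i₀ (∏ i, a i)) := by
  have collect (s : Finset ι) (b : ι → A) :
      M (b * ∏ i ∈ s, Pi.mulSingle i (a i)) = M (b * Pi.mulSingle i₀ (∏ i ∈ s, a i)) := by
    induction s using Finset.induction_on generalizing b with
    | empty => simp
    | insert k s hk ih =>
      rw [Finset.prod_insert hk, Finset.prod_insert hk, ← mul_assoc, ih,
        mul_right_comm, balance _ _ k i₀, Pi.mulSingle_mul, mul_assoc, mul_comm (Pi.mulSingle i₀ _)]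
  simpa only [one_mul, Finset.univ_prod_mulSingle] using collect univ 1

variable {R A F : Type*} [CommSemiring R] [CommSemiring A] [Algebra R A] [AddCommMonoid F]
  [Module R F]

/-- The linear map obtained from a multilinear map `M` on an algebra by multiplying the `i`-th
entry of `a` by a variable element `u`. -/
def mulAt (M : MultilinearMap R (fun _ : ι => A) F) (a : ι → A) (i : ι) : A →ₗ[R] F :=
  M.toLinearMap a i ∘ₗ LinearMap.mulLeft R (a i)

theorem mulAt_apply (M : MultilinearMap R (fun _ : ι => A) F) (a : ι → A) (i : ι) (u : A) :
    mulAt M a i u = M (a * Pi.mulSingle i u) := by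
  refine congrArg M (funext fun k => ?_)
  obtain rfl | hk := eq_or_ne k i <;> simp [*]

theorem mulAt_mul_mulSingle_comm (M : MultilinearMap R (fun _ : ι => A) F) (a : ι → A) (i j : ι)
    (u v : A) : mulAt M (a * Pi.mulSingle i u) j v = mulAt M (a * Pi.mulSingle j v) i u := by
  rw [mulAt_apply, mulAt_apply, mul_right_comm]

end MultiplicationInOneVariable

section Balance

variable {X 𝕜 F ι : Type*} [TopologicalSpace X] [RCLike 𝕜] [NormedAddCommGroup F]
  [NormedSpace 𝕜 F] [DecidableEq ι]

theorem norm_mul_mulSingle_apply_le (a : ι → X →ᵇ 𝕜) {u : X →ᵇ 𝕜} (hu : ‖u‖ ≤ 1) (i k : ι) :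
    ‖(a * Pi.mulSingle i u : ι → X →ᵇ 𝕜) k‖ ≤ ‖a k‖ := by
  obtain rfl | hk := eq_or_ne k i
  · simpa using (norm_mul_le _ _).trans (mul_le_of_le_one_right (norm_nonneg (a k)) hu)
  · simp [hk]

variable [Finite ι] {M : ContinuousMultilinearMap 𝕜 (fun _ : ι => X →ᵇ 𝕜) F}

theorem map_mul_mulSingle_ofReal_comm (hM : IsOrthosymmetric M) (a : ι → X →ᵇ 𝕜) (i j : ι)
    (u : X →ᵇ ℝ) : M (a * Pi.mulSingle i (ofRealBCF 𝕜 u)) =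
      M (a * Pi.mulSingle j (ofRealBCF 𝕜 u)) := by
  obtain rfl | hij := eq_or_ne i j
  · rfl
  cases nonempty_fintype ι
  let β : (X →ᵇ ℝ) →+ (X →ᵇ ℝ) →+ F := AddMonoidHom.mk'
    (fun u => (mulAt M.toMultilinearMap (a * Pi.mulSingle i (ofRealBCF 𝕜 u)) j).toAddMonoidHom.comp
      (ofRealBCF 𝕜 (X := X)).toLinearMap.toAddMonoidHom) fun u v => by
        ext w
        have comm := mulAt_mul_mulSingle_comm M.toMultilinearMap a i j
        simp [comm _ (ofRealBCF 𝕜 w)]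
  have β_apply (v w : X →ᵇ ℝ) : β v w =
      M (a * Pi.mulSingle i (ofRealBCF 𝕜 v) * Pi.mulSingle j (ofRealBCF 𝕜 w)) :=
    mulAt_apply M.toMultilinearMap _ j _
  have one : ofRealBCF 𝕜 (1 : X →ᵇ ℝ) = 1 := by ext x; simp
  have bound (v w : X →ᵇ ℝ) (hv : ‖v‖ ≤ 1) (hw : ‖w‖ ≤ 1) : ‖β v w‖ ≤ ‖M‖ * ∏ k, ‖a k‖ := by
    rw [β_apply]
    exact M.le_opNorm_mul_prod_of_le fun k =>
      (norm_mul_mulSingle_apply_le _ ((norm_ofRealBCF_le w).trans hw) j k).trans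
        (norm_mul_mulSingle_apply_le a ((norm_ofRealBCF_le v).trans hv) i k)
  have orth (v w : X →ᵇ ℝ) (hvw : v * w = 0) : β v w = 0 := by
    rw [β_apply]
    refine hM _ i j hij ?_
    ext x
    have hx : v x = 0 ∨ w x = 0 := mul_eq_zero.1 (DFunLike.congr_fun hvw x)
    rcases hx with hx | hx <;> simp [hij, hij.symm, hx]
  let : NormedSpace ℝ F := .restrictScalars ℝ 𝕜 F
  simpa [β_apply, one] using map_one_right_eq_map_one_left bound orth u

theorem map_mul_mulSingle_comm (hM : IsOrthosymmetric M) (a : ι → X →ᵇ 𝕜) (u : X →ᵇ 𝕜) (i j : ι) :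
    M (a * Pi.mulSingle i u) = M (a * Pi.mulSingle j u) := by
  let re : X →ᵇ ℝ := RCLike.reCLM.compLeftContinuousBounded X u
  let im : X →ᵇ ℝ := RCLike.imCLM.compLeftContinuousBounded X u
  have re_add_im : u = ofRealBCF 𝕜 re + (RCLike.I : 𝕜) • ofRealBCF 𝕜 im := by
    ext x
    simp [re, im, mul_comm (RCLike.I : 𝕜), RCLike.re_add_im]
  have real (v : X →ᵇ ℝ) : mulAt M.toMultilinearMap a i (ofRealBCF 𝕜 v) =
      mulAt M.toMultilinearMap a j (ofRealBCF 𝕜 v) := by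
    simpa only [mulAt_apply, ContinuousMultilinearMap.coe_coe] using
      map_mul_mulSingle_ofReal_comm hM a i j v
  have key : mulAt M.toMultilinearMap a i u = mulAt M.toMultilinearMap a j u := by
    rw [re_add_im]
    simp only [map_add, map_smul, real]
  simpa only [mulAt_apply, ContinuousMultilinearMap.coe_coe] using key

end Balance

section CommonFactor

variable {X 𝕜 : Type*} [TopologicalSpace X] [RCLike 𝕜]

variable (𝕜) in
theorem exists_norm_pow_eq {m : ℕ} (hm : m ≠ 0) {q : X → ℝ} (hq : Continuous q)
    (hq₀ : ∀ x, 0 ≤ q x) (hq_zero : Filter.Tendsto q (Filter.cocompact X) (nhds 0)) :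
    ∃ w : C₀(X, 𝕜), ∀ x, ‖w x‖ ^ m = q x := by
  have hm' : (0 : ℝ) < (m : ℝ)⁻¹ := by positivity
  refine ⟨⟨⟨fun x => ((q x ^ (m : ℝ)⁻¹ : ℝ) : 𝕜), ?_⟩, ?_⟩, fun x => ?_⟩
  · exact RCLike.continuous_ofReal.comp (hq.rpow_const fun x => .inr hm'.le)
  · have root_zero := hq_zero.rpow_const (p := (m : ℝ)⁻¹) (.inr hm'.le)
    simpa [Function.comp_def, Real.zero_rpow hm'.ne'] using
      ((RCLike.continuous_ofReal (K := 𝕜)).tendsto _).comp root_zero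
  · change ‖((q x ^ (m : ℝ)⁻¹ : ℝ) : 𝕜)‖ ^ m = q x
    rw [RCLike.norm_ofReal, abs_of_nonneg (Real.rpow_nonneg (hq₀ x) _),
      Real.rpow_inv_natCast_pow (hq₀ x) hm]

theorem norm_pow_le_of_forall {w : C₀(X, 𝕜)} {m : ℕ} (hm : m ≠ 0) {C : ℝ} (hC : 0 ≤ C)
    (h : ∀ x, ‖w x‖ ^ m ≤ C) : ‖w‖ ^ m ≤ C := by
  have hroot : ‖w‖ ≤ C ^ (m : ℝ)⁻¹ := norm_le_of_forall (Real.rpow_nonneg hC _) fun x => by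
    rw [← pow_le_pow_iff_left₀ (norm_nonneg _) (Real.rpow_nonneg hC _) hm,
      Real.rpow_inv_natCast_pow hC hm]
    exact h x
  exact (pow_le_pow_left₀ (norm_nonneg w) hroot m).trans_eq (Real.rpow_inv_natCast_pow hC hm)

theorem exists_eq_mul_pow {n : ℕ} {f w : C₀(X, 𝕜)} (h : ∀ x, ‖f x‖ ≤ ‖w x‖ ^ (n + 1)) :
    ∃ a : X →ᵇ 𝕜, (∀ x, f x = a x * w x ^ n) ∧ ‖a‖ ≤ ‖w‖ := by
  have f_eq_zero {x : X} (hx : w x = 0) : f x = 0 := by simpa [hx] using h x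
  have quotient_le (x : X) : ‖f x / w x ^ n‖ ≤ ‖w x‖ := by
    by_cases hx : w x = 0
    · simp [f_eq_zero hx]
    · rw [norm_div, norm_pow, div_le_iff₀ (pow_pos (norm_pos_iff.2 hx) _), ← pow_succ']
      exact h x
  have quotient_continuous : Continuous fun x => f x / w x ^ n := by
    refine continuous_iff_continuousAt.2 fun x => ?_
    by_cases hx : w x = 0
    · rw [ContinuousAt, f_eq_zero hx, zero_div]
      exact squeeze_zero_norm quotient_le (by simpa [hx] using w.continuous.norm.tendsto x)
    · exact f.continuous.continuousAt.div (w.continuous.continuousAt.pow n) (pow_ne_zero n hx)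
  have quotient_le' (x : X) : ‖f x / w x ^ n‖ ≤ ‖w‖ := (quotient_le x).trans (norm_apply_le w x)
  refine ⟨.ofNormedAddCommGroup _ quotient_continuous ‖w‖ quotient_le', fun x => ?_,
    BoundedContinuousFunction.norm_ofNormedAddCommGroup_le _ (norm_nonneg w) quotient_le'⟩
  by_cases hx : w x = 0
  · simp [f_eq_zero hx]
  · simp [hx]

theorem exists_common_factor (n : ℕ) {κ : Type*} [Fintype κ] (f : κ → C₀(X, 𝕜)) :
    ∃ (w : C₀(X, 𝕜)) (a : κ → X →ᵇ 𝕜),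
      (∀ k x, f k x = a k x * w x ^ n) ∧ ∀ k, ‖a k‖ * ‖w‖ ^ n ≤ ∑ k, ‖f k‖ := by
  obtain ⟨w, hw⟩ := exists_norm_pow_eq 𝕜 n.succ_ne_zero (q := fun x => ∑ k, ‖f k x‖)
    (continuous_finsetSum _ fun k _ => (f k).continuous.norm)
    (fun x => Finset.sum_nonneg fun k _ => norm_nonneg _)
    (by simpa using tendsto_finsetSum univ fun k _ => (zero_at_infty (f k)).norm)
  have hfw (k : κ) (x : X) : ‖f k x‖ ≤ ‖w x‖ ^ (n + 1) :=
    (Finset.single_le_sum (f := fun k => ‖f k x‖) (fun k _ => norm_nonneg _)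
      (Finset.mem_univ k)).trans_eq (hw x).symm
  choose a ha ha_norm using fun k => exists_eq_mul_pow (hfw k)
  refine ⟨w, a, ha, fun k => ?_⟩
  calc
    ‖a k‖ * ‖w‖ ^ n ≤ ‖w‖ ^ (n + 1) := by
      rw [pow_succ']
      exact mul_le_mul_of_nonneg_right (ha_norm k) (by positivity)
    _ ≤ ∑ k, ‖f k‖ := norm_pow_le_of_forall n.succ_ne_zero (by positivity) fun x =>
      (hw x).trans_le (Finset.sum_le_sum fun k _ => norm_apply_le (f k) x)

end CommonFactor

section Linearization

variable {X 𝕜 F ι : Type*} [TopologicalSpace X] [RCLike 𝕜] [NormedAddCommGroup F]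
  [NormedSpace 𝕜 F] [Fintype ι] {L : ContinuousMultilinearMap 𝕜 (fun _ : ι => C₀(X, 𝕜)) F}

omit [Fintype ι] in
theorem IsOrthosymmetric.compContinuousLinearMap_bddMul (hL : IsOrthosymmetric L)
    (w : C₀(X, 𝕜)) : IsOrthosymmetric (L.compContinuousLinearMap fun _ => bddMul w) := by
  intro a i j hij haij
  refine hL _ i j hij ?_
  ext x
  have hx : a i x = 0 ∨ a j x = 0 := mul_eq_zero.1 (DFunLike.congr_fun haij x)
  rcases hx with hx | hx <;> simp [hx]

theorem prod_bddMul_apply (w : C₀(X, 𝕜)) (a : ι → X →ᵇ 𝕜) (x : X) :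
    ∏ i, bddMul w (a i) x = (∏ i, a i) x * w x ^ Fintype.card ι := by
  simp only [bddMul_apply, Finset.prod_mul_distrib, Finset.prod_const, Finset.card_univ,
    BoundedContinuousFunction.prod_apply]

theorem bddMul_eq_bddMul_of_mul_pow_eq {w : C₀(X, 𝕜)} {a b : X →ᵇ 𝕜} {n : ℕ}
    (hab : ∀ x, a x * w x ^ n = b x * w x ^ n) : bddMul w a = bddMul w b := by
  ext x
  by_cases hx : w x = 0
  · simp [hx]
  · rw [bddMul_apply, bddMul_apply, mul_right_cancel₀ (pow_ne_zero n hx) (hab x)]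

omit [Fintype ι] in
theorem bddMul_mulSingle_eq_update [DecidableEq ι] (w : C₀(X, 𝕜)) (i₀ : ι) (a : X →ᵇ 𝕜) :
    (fun i => bddMul w (Pi.mulSingle (M := fun _ => X →ᵇ 𝕜) i₀ a i)) =
      Function.update (fun _ => w) i₀ (bddMul w a) := by
  funext i
  obtain rfl | hi := eq_or_ne i i₀
  · rw [Pi.mulSingle_eq_same, Function.update_self]
  · rw [Pi.mulSingle_eq_of_ne hi, Function.update_of_ne hi, bddMul_one]

theorem prod_update_bddMul_apply [DecidableEq ι] (w : C₀(X, 𝕜)) (i₀ : ι) (a : X →ᵇ 𝕜) (x : X) :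
    ∏ i, Function.update (fun _ => w) i₀ (bddMul w a) i x = a x * w x ^ Fintype.card ι := by
  rw [← bddMul_mulSingle_eq_update, prod_bddMul_apply, Fintype.prod_pi_mulSingle']

theorem norm_map_update_bddMul_le [DecidableEq ι] (w : C₀(X, 𝕜)) (i₀ : ι) (a : X →ᵇ 𝕜) :
    ‖L (Function.update (fun _ => w) i₀ (bddMul w a))‖ ≤
      ‖L‖ * (‖a‖ * ‖w‖ ^ Fintype.card ι) := by
  calc
    _ ≤ ‖L‖ * ∏ i, Pi.mulSingle (M := fun _ => ℝ) i₀ ‖a‖ i * ‖w‖ := by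
      refine L.le_opNorm_mul_prod_of_le fun i => ?_
      obtain rfl | hi := eq_or_ne i i₀
      · rw [Function.update_self, Pi.mulSingle_eq_same, mul_comm]
        exact norm_bddMul_le w a
      · rw [Function.update_of_ne hi, Pi.mulSingle_eq_of_ne hi, one_mul]
    _ = ‖L‖ * (‖a‖ * ‖w‖ ^ Fintype.card ι) := by
      rw [Finset.prod_mul_distrib, Fintype.prod_pi_mulSingle', Finset.prod_const, Finset.card_univ]

theorem IsOrthosymmetric.map_bddMul_eq_map_update [DecidableEq ι] (hL : IsOrthosymmetric L)
    (w : C₀(X, 𝕜)) (a : ι → X →ᵇ 𝕜) (i₀ : ι) :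
    (L fun i => bddMul w (a i)) = L (Function.update (fun _ => w) i₀ (bddMul w (∏ i, a i))) := by
  rw [← bddMul_mulSingle_eq_update]
  exact map_eq_map_mulSingle_prod (M := L.compContinuousLinearMap fun _ => bddMul w)
    (map_mul_mulSingle_comm (hL.compContinuousLinearMap_bddMul w)) i₀ a

theorem IsOrthosymmetric.map_eq_map_of_prod_eq (hL : IsOrthosymmetric L) {f g : ι → C₀(X, 𝕜)}
    (hfg : ∀ x, ∏ i, f i x = ∏ i, g i x) : L f = L g := by
  classical
  obtain hι | ⟨⟨i₀⟩⟩ := isEmpty_or_nonempty ι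
  · rw [Subsingleton.elim f g]
  obtain ⟨w, c, hc, -⟩ := exists_common_factor 1 (Sum.elim f g)
  have f_eq : f = fun i => bddMul w (c (.inl i)) := by
    ext i x
    simpa using hc (.inl i) x
  have g_eq : g = fun i => bddMul w (c (.inr i)) := by
    ext i x
    simpa using hc (.inr i) x
  have bddMul_eq : bddMul w (∏ i, c (.inl i)) = bddMul w (∏ i, c (.inr i)) :=
    bddMul_eq_bddMul_of_mul_pow_eq (n := Fintype.card ι) fun x => by
      simpa only [f_eq, g_eq, prod_bddMul_apply] using hfg x
  rw [f_eq, g_eq, hL.map_bddMul_eq_map_update w _ i₀, hL.map_bddMul_eq_map_update w _ i₀, bddMul_eq]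

theorem exists_prod_apply_eq [Nonempty ι] (p : C₀(X, 𝕜)) :
    ∃ f : ι → C₀(X, 𝕜), ∀ x, ∏ i, f i x = p x := by
  classical
  obtain ⟨w, a, ha, -⟩ := exists_common_factor (Fintype.card ι) fun _ : Unit => p
  exact ⟨Function.update (fun _ => w) (Classical.arbitrary ι) (bddMul w (a ())), fun x => by
    rw [prod_update_bddMul_apply, ha ()]⟩

theorem exists_linear_of_map_eq_map_of_prod_eq [Nonempty ι]
    (hL : ∀ f g : ι → C₀(X, 𝕜), (∀ x, ∏ i, f i x = ∏ i, g i x) → L f = L g) :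
    ∃ T : C₀(X, 𝕜) →L[𝕜] F, ∀ (f : ι → C₀(X, 𝕜)) (p : C₀(X, 𝕜)),
      (∀ x, p x = ∏ i, f i x) → L f = T p := by
  classical
  let i₀ := Classical.arbitrary ι
  let n := Fintype.card ι
  let Φ (w : C₀(X, 𝕜)) : (X →ᵇ 𝕜) →L[𝕜] F :=
    (L.toContinuousLinearMap (fun _ => w) i₀).comp (bddMul w)
  choose f hf using exists_prod_apply_eq (X := X) (𝕜 := 𝕜) (ι := ι)
  have map_eq {p w : C₀(X, 𝕜)} {a : X →ᵇ 𝕜} (ha : ∀ x, p x = a x * w x ^ n) :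
      L (f p) = Φ w a :=
    hL _ _ fun x => ((hf p x).trans (ha x)).trans (prod_update_bddMul_apply w i₀ a x).symm
  let T : C₀(X, 𝕜) →ₗ[𝕜] F :=
    { toFun p := L (f p)
      map_add' p q := by
        obtain ⟨w, a, ha, -⟩ := exists_common_factor n ![p, q]
        have ha_add (x : X) : (p + q) x = (a 0 + a 1) x * w x ^ n :=
          (congrArg₂ (· + ·) (ha 0 x) (ha 1 x)).trans (add_mul _ _ _).symm
        rw [map_eq (p := p) (ha 0), map_eq (p := q) (ha 1), map_eq ha_add, map_add]
      map_smul' c p := by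
        obtain ⟨w, a, ha, -⟩ := exists_common_factor n fun _ : Unit => p
        have ha_smul (x : X) : (c • p) x = (c • a ()) x * w x ^ n :=
          (congrArg (c * ·) (ha () x)).trans (mul_assoc _ _ _).symm
        rw [map_eq (ha ()), map_eq ha_smul, map_smul, RingHom.id_apply] }
  have norm_le (p : C₀(X, 𝕜)) : ‖T p‖ ≤ ‖L‖ * ‖p‖ := by
    obtain ⟨w, a, ha, ha_norm⟩ := exists_common_factor n fun _ : Unit => p
    calc
      ‖T p‖ = ‖Φ w (a ())‖ := congrArg norm (map_eq (ha ()))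
      _ ≤ ‖L‖ * (‖a ()‖ * ‖w‖ ^ n) := norm_map_update_bddMul_le w i₀ (a ())
      _ ≤ ‖L‖ * ‖p‖ := by
        gcongr
        simpa using ha_norm ()
  exact ⟨T.mkContinuous ‖L‖ norm_le, fun g p hp => hL _ _ fun x => by rw [← hp, hf]⟩

end Linearization

theorem stmt_4_general {X 𝕜 F ι : Type*} [TopologicalSpace X] [RCLike 𝕜] [NormedAddCommGroup F]
    [NormedSpace 𝕜 F] [Fintype ι] (L : ContinuousMultilinearMap 𝕜 (fun _ : ι => C₀(X, 𝕜)) F)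
    (hsymm : ∀ (v : ι → C₀(X, 𝕜)) (σ : Equiv.Perm ι), (L fun i => v (σ i)) = L v)
    (horth : ∀ f g : C₀(X, 𝕜), f * g = 0 → L (fun _ => f + g) = L (fun _ => f) + L fun _ => g) :
    ∃ T : C₀(X, 𝕜) →L[𝕜] F, ∀ (f : ι → C₀(X, 𝕜)) (p : C₀(X, 𝕜)),
      (∀ x, p x = ∏ i, f i x) → L f = T p := by
  cases isEmpty_or_nonempty ι with
  | inl =>
    have horth₀ := horth 0 0 (mul_zero 0)
    refine ⟨0, fun f _ _ => ?_⟩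
    rw [Subsingleton.elim f fun _ => 0]
    simpa using horth₀
  | inr =>
    have hL := isOrthosymmetric_of_orthogonally_additive hsymm horth
    exact exists_linear_of_map_eq_map_of_prod_eq fun f g => hL.map_eq_map_of_prod_eq

/-- linearization of bounded orthogonally additive `n`-homogeneous
polynomials on `C₀(X)`: `P(f) = T(fⁿ)` for a bounded linear `T`. -/
theorem stmt_4 {X : Type*} [TopologicalSpace X] [LocallyCompactSpace X] [T2Space X]
    {F : Type*} [NormedAddCommGroup F] [NormedSpace ℂ F]
    (n : ℕ) (hn : 0 < n) (P : C₀(X, ℂ) → F) (hP : IsHomogPolynomial n P)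
    (horth : ∀ f g : C₀(X, ℂ), f * g = 0 → P (f + g) = P f + P g) :
    ∃ T : C₀(X, ℂ) →L[ℂ] F, ∀ f fn : C₀(X, ℂ),
      (∀ x : X, fn x = (f x) ^ n) → P f = T fn := by
  obtain ⟨L, hsymm, hPL⟩ := hP
  simp only [hPL] at horth ⊢
  obtain ⟨T, hT⟩ := stmt_4_general L hsymm horth
  exact ⟨T, fun f fn hfn => hT _ fn (by simpa using hfn)⟩
end

section
/- Let A, B be C*-algebras and J : A → B a Jordan homomorphism with P(a) = hJ(a)ⁿ for an invertible central element h of M(B), where B = span P(A) and P is zero product preserving on all of A. Then the kernel of J is a closed two-sided ideal, and J is injective if and only if P has trivial positive kernel (P(a) = 0, a ≥ 0 implies a = 0). -/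
open scoped ComplexOrder MultiplierAlgebra

/-! The kernel of a Jordan homomorphism `J` onto a C*-algebra is an ideal because C*-algebras are
semiprime. It is closed because `J` shrinks quasispectra: if `a` is a limit of elements of the
kernel and `J d = (J a)⋆`, then `J (a d + d a) = J a (J a)⋆ + (J a)⋆ J a` has quasispectrum `{0}`,
hence vanishes, being self-adjoint, and so does `J a`. Since `P a = h J(aⁿ)` with `h` invertible and
`P(A)` spans `B`, the map `J` is onto, and `P a = 0` is the same as `aⁿ ∈ ker J`. -/

/-- A map preserving the Jordan product `a * b + b * a`; linearity is assumed separately, and the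
usual factor `1 / 2` is left out. -/
def IsJordanHom {A B : Type*} [Mul A] [Add A] [Mul B] [Add B] (J : A → B) : Prop :=
  ∀ a b : A, J (a * b + b * a) = J a * J b + J b * J a

namespace IsJordanHom

section NonUnital

variable {R A B : Type*} [CommRing R] [NonUnitalRing A] [NonUnitalRing B] [Module R A] [Module R B]
  {J : A →ₗ[R] B}

theorem comp_nonUnitalAlgHom {D : Type*} [NonUnitalRing D] [Module R D] (hJ : IsJordanHom J)
    (f : B →ₙₐ[R] D) : IsJordanHom ((f : B →ₗ[R] D) ∘ₗ J) := fun a b => by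
  simpa using congrArg f (hJ a b)

theorem map_mul_eq_neg_map_mul (hJ : IsJordanHom J) {a : A} (ha : J a = 0) (x : A) :
    J (x * a) = -J (a * x) := by
  rw [eq_neg_iff_add_eq_zero, ← map_add, hJ, ha, zero_mul, mul_zero, add_zero]

variable [Invertible (2 : R)]

theorem map_mul_of_commute (hJ : IsJordanHom J) {a b : A} (hab : Commute a b)
    (hJab : Commute (J a) (J b)) : J (a * b) = J a * J b := by
  have hsymm := hJ a b
  rw [← hab.eq, ← hJab.eq, ← two_smul R, ← two_smul R, map_smul] at hsymm
  exact (isUnit_of_invertible (2 : R)).smul_left_cancel.1 hsymm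

/-- The double of `a * x * a` is `a ∘ (a ∘ x) - a² ∘ x`, where `∘` is the Jordan product. -/
theorem map_mul_mul_self (hJ : IsJordanHom J) (a x : A) : J (a * x * a) = J a * J x * J a := by
  have hsq : J (a * a) = J a * J a := hJ.map_mul_of_commute (.refl a) (.refl (J a))
  have htriple : (2 : R) • (a * x * a) =
      (a * (a * x + x * a) + (a * x + x * a) * a) - (a * a * x + x * (a * a)) := by
    rw [two_smul]; noncomm_ring
  refine (isUnit_of_invertible (2 : R)).smul_left_cancel.1 ?_
  rw [← map_smul, htriple, map_sub, hJ, hJ, hJ, hsq, two_smul]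
  noncomm_ring

theorem map_mul_mul_add_mul_mul (hJ : IsJordanHom J) (a x b : A) :
    J (a * x * b + b * x * a) = J a * J x * J b + J b * J x * J a := by
  have hpolar : a * x * b + b * x * a = (a + b) * x * (a + b) - a * x * a - b * x * b := by
    noncomm_ring
  simp only [hpolar, map_sub, hJ.map_mul_mul_self, map_add]
  noncomm_ring

theorem map_mul_mul_map_mul_eq_zero (hJ : IsJordanHom J) {a : A} (ha : J a = 0) (x z : A) :
    J (a * x) * J z * J (a * x) = 0 := by
  have hregroup : a * x * z * (x * a) + x * a * z * (a * x) =
      a * (x * z * x) * a + x * (a * z * a) * x := by noncomm_ring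
  have hzero : J (a * x * z * (x * a) + x * a * z * (a * x)) = 0 := by
    rw [hregroup, map_add, hJ.map_mul_mul_self a, hJ.map_mul_mul_self x (a * z * a),
      hJ.map_mul_mul_self a, ha]
    simp only [zero_mul, mul_zero, add_zero]
  refine (isUnit_of_invertible (2 : R)).smul_left_cancel.1 ?_
  rw [hJ.map_mul_mul_add_mul_mul, hJ.map_mul_eq_neg_map_mul ha, mul_neg, neg_mul, neg_mul,
    ← neg_add, neg_eq_zero] at hzero
  rw [two_smul, hzero, smul_zero]

theorem map_mul_eq_zero_of_semiprime (hJ : IsJordanHom J) (hsurj : Function.Surjective J)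
    (hB : ∀ b : B, (∀ z, b * z * b = 0) → b = 0) {a : A} (ha : J a = 0) (x : A) :
    J (a * x) = 0 ∧ J (x * a) = 0 := by
  have hax : J (a * x) = 0 :=
    hB _ (hsurj.forall.2 fun z => hJ.map_mul_mul_map_mul_eq_zero ha x z)
  exact ⟨hax, by rw [hJ.map_mul_eq_neg_map_mul ha, hax, neg_zero]⟩

end NonUnital

section Unital

variable {R A B : Type*} [CommRing R] [Invertible (2 : R)] [Ring A] [Ring B] [Algebra R A]
  [Algebra R B] {J : A →ₗ[R] B}

theorem map_pow (hJ : IsJordanHom J) (hone : J 1 = 1) (a : A) (k : ℕ) : J (a ^ k) = J a ^ k := by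
  induction k with
  | zero => rw [pow_zero, pow_zero, hone]
  | succ k ih =>
    have hcomm : Commute (J (a ^ k)) (J a) := ih ▸ Commute.pow_self (J a) k
    rw [pow_succ, hJ.map_mul_of_commute (Commute.pow_self a k) hcomm, ih, pow_succ]

theorem isUnit_map (hJ : IsJordanHom J) (hone : J 1 = 1) {a : A} (ha : IsUnit a) :
    IsUnit (J a) := by
  obtain ⟨u, rfl⟩ := ha
  have hinv : J u * J (↑u⁻¹ * ↑u⁻¹) * J u = 1 := by
    rw [← hJ.map_mul_mul_self, Units.mul_inv_cancel_left, Units.inv_mul, hone]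
  exact isUnit_iff_exists_and_exists.2 ⟨⟨_, by rwa [← mul_assoc]⟩, ⟨_, hinv⟩⟩

theorem spectrum_map_subset (hJ : IsJordanHom J) (hone : J 1 = 1) (a : A) :
    spectrum R (J a) ⊆ spectrum R a := by
  intro r hr hres
  have hmap : J (algebraMap R A r - a) = algebraMap R B r - J a := by
    rw [map_sub, Algebra.algebraMap_eq_smul_one, map_smul, hone, Algebra.algebraMap_eq_smul_one]
  exact hr (hmap ▸ hJ.isUnit_map hone hres :)

end Unital

end IsJordanHom

section UnitizationPow

variable (R : Type*) {A : Type*} [CommRing R] [NonUnitalRing A] [Module R A] [IsScalarTower R A A]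
  [SMulCommClass R A A]

/-- The power `a ^ n` of an element of a nonunital algebra, computed in the unitization. For `n = 0`
it is the junk value `0`. -/
def unitizationPow (a : A) (n : ℕ) : A :=
  ((a : Unitization R A) ^ n).snd

theorem inr_unitizationPow (a : A) {n : ℕ} (hn : n ≠ 0) :
    (Unitization.inr (unitizationPow R a n) : Unitization R A) = (a : Unitization R A) ^ n := by
  have hfst : ((a : Unitization R A) ^ n).fst = 0 := by
    rw [← Unitization.fstHom_apply R, map_pow, Unitization.fstHom_apply, Unitization.fst_inr,
      zero_pow hn]
  exact Unitization.ext (by rw [Unitization.fst_inr, hfst]) (Unitization.snd_inr R _)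

end UnitizationPow

section UnitalExtension

variable {R A C : Type*} [CommRing R] [NonUnitalRing A] [Module R A] [Ring C] [Algebra R C]

/-- The extension `r + a ↦ r • 1 + J a` of a linear map `J` from `A` into a unital algebra to the
unitization of `A`; it is used to transfer facts about unital Jordan homomorphisms to `J`. -/
def unitalExtension (J : A →ₗ[R] C) : Unitization R A →ₗ[R] C where
  toFun x := algebraMap R C x.fst + J x.snd
  map_add' x y := by simp only [Unitization.fst_add, Unitization.snd_add, map_add]; abel
  map_smul' r x := by
    simp only [Unitization.fst_smul, Unitization.snd_smul, map_smul, smul_eq_mul, map_mul,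
      Algebra.smul_def, RingHom.id_apply, mul_add]

theorem unitalExtension_apply (J : A →ₗ[R] C) (x : Unitization R A) :
    unitalExtension J x = algebraMap R C x.fst + J x.snd :=
  rfl

theorem unitalExtension_inr (J : A →ₗ[R] C) (a : A) :
    unitalExtension J (a : Unitization R A) = J a := by
  simp [unitalExtension_apply]

theorem unitalExtension_one (J : A →ₗ[R] C) : unitalExtension J 1 = 1 := by
  simp [unitalExtension_apply]

namespace IsJordanHom

theorem unitalExtension {J : A →ₗ[R] C} (hJ : IsJordanHom J) :
    IsJordanHom (unitalExtension J) := by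
  intro x y
  have hsnd : J (x.snd * y.snd) + J (y.snd * x.snd) = J x.snd * J y.snd + J y.snd * J x.snd := by
    rw [← map_add, hJ]
  have hx := Algebra.commutes x.fst (J y.snd)
  have hy := Algebra.commutes y.fst (J x.snd)
  have hxy := Algebra.commutes x.fst (algebraMap R C y.fst)
  simp only [unitalExtension_apply, Unitization.fst_mul, Unitization.snd_mul, map_add, map_mul,
    map_smul, Algebra.smul_def, mul_add, add_mul]
  rw [← hx, ← hy, ← hxy, eq_sub_of_add_eq hsnd]
  abel

variable [IsScalarTower R A A] [SMulCommClass R A A] [Invertible (2 : R)]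

theorem map_unitizationPow {J : A →ₗ[R] C} (hJ : IsJordanHom J) (a : A) {n : ℕ} (hn : n ≠ 0) :
    J (unitizationPow R a n) = J a ^ n := by
  rw [← unitalExtension_inr J a, ← hJ.unitalExtension.map_pow (unitalExtension_one J),
    ← inr_unitizationPow R a hn, unitalExtension_inr]

theorem quasispectrum_map_subset {B : Type*} [NonUnitalRing B] [Module R B] [IsScalarTower R B B]
    [SMulCommClass R B B] {J : A →ₗ[R] B} (hJ : IsJordanHom J) (a : A) :
    quasispectrum R (J a) ⊆ quasispectrum R a := by
  have hinr := hJ.comp_nonUnitalAlgHom (Unitization.inrNonUnitalAlgHom R B)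
  have hspec := hinr.unitalExtension.spectrum_map_subset (unitalExtension_one _)
    (a : Unitization R A)
  rw [unitalExtension_inr] at hspec
  rwa [Unitization.quasispectrum_eq_spectrum_inr, Unitization.quasispectrum_eq_spectrum_inr]

end IsJordanHom

end UnitalExtension

section CStar

theorem norm_le_norm_of_mem_quasispectrum {𝕜 A : Type*} [NormedField 𝕜] [CompleteSpace 𝕜]
    [NonUnitalNormedRing A] [NormedSpace 𝕜 A] [CompleteSpace A] [IsScalarTower 𝕜 A A]
    [SMulCommClass 𝕜 A A] {a : A} {r : 𝕜} (hr : r ∈ quasispectrum 𝕜 a) : ‖r‖ ≤ ‖a‖ := by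
  rw [Unitization.quasispectrum_eq_spectrum_inr,
    ← AlgEquiv.spectrum_eq (WithLp.unitizationAlgEquiv 𝕜).symm (a : Unitization 𝕜 A)] at hr
  have hone : WithLp.ofLp (1 : WithLp 1 (Unitization 𝕜 A)) = 1 := rfl
  simpa [WithLp.unitization_norm_def, hone] using spectrum.norm_le_norm_mul_of_mem hr

theorem eq_zero_of_forall_mul_mul_self_eq_zero {B : Type*} [NonUnitalNormedRing B] [StarRing B]
    [CStarRing B] {b : B} (hb : ∀ z, b * z * b = 0) : b = 0 := by
  rw [← CStarRing.star_mul_self_eq_zero_iff, ← CStarRing.star_mul_self_eq_zero_iff, star_mul,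
    star_star, mul_assoc, ← mul_assoc b, hb, mul_zero]

theorem eq_zero_of_mul_star_self_add_star_mul_self_eq_zero {B : Type*} [NonUnitalCStarAlgebra B]
    {b : B} (hb : b * star b + star b * b = 0) : b = 0 := by
  let _ := CStarAlgebra.spectralOrder B
  let _ := CStarAlgebra.spectralOrderedRing B
  have hboth := (add_eq_zero_iff_of_nonneg (mul_star_self_nonneg b) (star_mul_self_nonneg b)).1 hb
  exact (CStarRing.star_mul_self_eq_zero_iff b).1 hboth.2

theorem eq_zero_of_isSelfAdjoint_of_pow_eq_zero {E : Type*} [NormedRing E] [StarRing E]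
    [CStarRing E] {a : E} (ha : IsSelfAdjoint a) {n : ℕ} (hpow : a ^ n = 0) : a = 0 := by
  have hdyadic : a ^ 2 ^ n = 0 := pow_eq_zero_of_le Nat.lt_two_pow_self.le hpow
  rw [← norm_eq_zero, ha.norm_pow_two_pow] at hdyadic
  exact norm_eq_zero.1 (pow_eq_zero_iff (by positivity) |>.1 hdyadic)

theorem eq_zero_of_unitizationPow_eq_zero {A : Type*} [NonUnitalCStarAlgebra A] {a : A}
    (ha : IsSelfAdjoint a) {n : ℕ} (hn : n ≠ 0) (hpow : unitizationPow ℂ a n = 0) :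
    a = 0 := by
  have hinr : (a : Unitization ℂ A) ^ n = 0 := by
    rw [← inr_unitizationPow ℂ a hn, hpow, Unitization.inr_zero]
  exact Unitization.inr_injective (eq_zero_of_isSelfAdjoint_of_pow_eq_zero (ha.inr ℂ) hinr)

namespace IsJordanHom

variable {A B : Type*} [NonUnitalNormedRing A] [NormedSpace ℂ A] [CompleteSpace A]
  [IsScalarTower ℂ A A] [SMulCommClass ℂ A A] [NonUnitalCStarAlgebra B] {J : A →ₗ[ℂ] B}

theorem map_eq_zero_of_mem_closure_of_isStarNormal (hJ : IsJordanHom J) {a : A}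
    (ha : a ∈ closure {a : A | J a = 0}) (hnormal : IsStarNormal (J a)) : J a = 0 := by
  refine CFC.eq_zero_of_quasispectrum_eq_zero (R := ℂ) (J a) fun r hr => norm_le_zero_iff.1 ?_
  refine le_of_forall_pos_le_add fun ε hε => ?_
  obtain ⟨y, hy, hdist⟩ := Metric.mem_closure_iff.1 ha ε hε
  have hshift : J (a - y) = J a := by rw [map_sub, show J y = 0 from hy, sub_zero]
  have hr' : r ∈ quasispectrum ℂ (a - y) := hJ.quasispectrum_map_subset _ (hshift.symm ▸ hr)
  rw [zero_add]
  exact (norm_le_norm_of_mem_quasispectrum hr').trans (dist_eq_norm a y ▸ hdist.le)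

theorem isClosed_ker (hJ : IsJordanHom J) (hsurj : Function.Surjective J) :
    IsClosed {a : A | J a = 0} := by
  refine isClosed_of_closure_subset fun a ha => ?_
  obtain ⟨d, hd⟩ := hsurj (star (J a))
  have hmap : J (a * d + d * a) = J a * star (J a) + star (J a) * J a := by rw [hJ, hd]
  have hmem : a * d + d * a ∈ closure {a : A | J a = 0} := by
    refine map_mem_closure (f := fun y => y * d + d * y) (by fun_prop) ha fun y hy => ?_
    rw [Set.mem_ofPred_eq] at hy ⊢
    rw [hJ, hy, zero_mul, mul_zero, add_zero]
  have hsa : IsSelfAdjoint (J (a * d + d * a)) :=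
    hmap ▸ (IsSelfAdjoint.mul_star_self _).add (IsSelfAdjoint.star_mul_self _)
  refine eq_zero_of_mul_star_self_add_star_mul_self_eq_zero ?_
  rw [← hmap, hJ.map_eq_zero_of_mem_closure_of_isStarNormal hmem hsa.isStarNormal]

end IsJordanHom

end CStar

section Multiplier

variable {𝕜 B : Type*} [NontriviallyNormedField 𝕜] [NonUnitalNormedRing B] [NormedSpace 𝕜 B]
  [SMulCommClass 𝕜 B B] [IsScalarTower 𝕜 B B]

theorem doubleCentralizer_fst_injective {h : 𝓜(𝕜, B)} (hh : IsUnit h) :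
    Function.Injective h.fst := by
  obtain ⟨u, rfl⟩ := hh
  refine Function.LeftInverse.injective (g := (↑u⁻¹ : 𝓜(𝕜, B)).fst) fun b => ?_
  rw [← mul_apply_eq_comp, ← DoubleCentralizer.mul_fst, Units.inv_mul,
    DoubleCentralizer.one_fst, one_apply_eq_self]

theorem doubleCentralizer_coe_injective [RegularNormedAlgebra 𝕜 B] :
    Function.Injective fun b : B => (b : 𝓜(𝕜, B)) := fun _ _ hbc =>
  (ContinuousLinearMap.isometry_mul 𝕜 B).injective (congrArg (·.fst) hbc)

variable [StarRing B] [CStarRing B]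

theorem doubleCentralizer_fst_mul (h : 𝓜(𝕜, B)) (x y : B) : h.fst (x * y) = h.fst x * y := by
  have hzero : ∀ z, z * (h.fst (x * y) - h.fst x * y) = 0 := fun z => by
    rw [mul_sub, ← mul_assoc z (h.fst x), ← h.central, ← h.central, mul_assoc, sub_self]
  exact sub_eq_zero.1 ((CStarRing.star_mul_self_eq_zero_iff _).1 (hzero _))

theorem doubleCentralizer_mul_coe (h : 𝓜(𝕜, B)) (b : B) :
    h * (b : 𝓜(𝕜, B)) = ((h.fst b : B) : 𝓜(𝕜, B)) := by
  refine DoubleCentralizer.ext _ _ _ _ (Prod.ext ?_ ?_) <;> ext x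
  · exact doubleCentralizer_fst_mul h b x
  · exact h.central x b

end Multiplier

theorem surjective_of_span_range_eq_top {R ι M N N' : Type*} [Semiring R] [AddCommMonoid M]
    [AddCommMonoid N] [AddCommMonoid N'] [Module R M] [Module R N] [Module R N'] {T : N →ₗ[R] N'}
    (hT : Function.Injective T) {J : M →ₗ[R] N} {P : ι → N'}
    (hP : ∀ i, P i ∈ LinearMap.range (T ∘ₗ J))
    (hspan : Submodule.span R (Set.range P) = ⊤) : Function.Surjective J := by
  intro y
  have hle : Submodule.span R (Set.range P) ≤ LinearMap.range (T ∘ₗ J) :=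
    Submodule.span_le.2 (Set.range_subset_iff.2 hP)
  obtain ⟨x, hx⟩ := hle (hspan ▸ Submodule.mem_top : T y ∈ Submodule.span R (Set.range P))
  exact ⟨x, hT hx⟩

theorem IsJordanHom.eq_fst_map_unitizationPow {A B : Type*} [NonUnitalRing A] [Module ℂ A]
    [IsScalarTower ℂ A A] [SMulCommClass ℂ A A] [NonUnitalCStarAlgebra B] {J : A →ₗ[ℂ] B}
    (hJ : IsJordanHom J) {n : ℕ} (hn : n ≠ 0) {h : 𝓜(ℂ, B)} {a : A} {b : B}
    (hb : (b : 𝓜(ℂ, B)) = h * (J a : 𝓜(ℂ, B)) ^ n) :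
    b = h.fst (J (unitizationPow ℂ a n)) := by
  have hcoe := (hJ.comp_nonUnitalAlgHom
    (DoubleCentralizer.coeHom (𝕜 := ℂ) (A := B)).toNonUnitalAlgHom).map_unitizationPow a hn
  refine doubleCentralizer_coe_injective (𝕜 := ℂ) (hb.trans ?_)
  exact (congrArg (h * ·) hcoe.symm).trans (doubleCentralizer_mul_coe h _)

theorem stmt_14_general {A B : Type*}
    [NonUnitalCStarAlgebra A] [PartialOrder A] [StarOrderedRing A]
    [NonUnitalCStarAlgebra B]
    {n : ℕ} (hn : n ≠ 0) {P : A → B} {J : A →ₗ[ℂ] B} (hJ : IsJordanHom J)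
    {h : 𝓜(ℂ, B)} (hh : IsUnit h)
    (hform : ∀ a : A, (P a : 𝓜(ℂ, B)) = h * ((J a : 𝓜(ℂ, B)) ^ n))
    (hspan : Submodule.span ℂ (Set.range P) = ⊤) :
    IsClosed {a : A | J a = 0} ∧
    (∀ a x : A, J a = 0 → J (a * x) = 0 ∧ J (x * a) = 0) ∧
    (Function.Injective J ↔ ∀ a : A, 0 ≤ a → P a = 0 → a = 0) := by
  have hP (a : A) : P a = h.fst (J (unitizationPow ℂ a n)) :=
    hJ.eq_fst_map_unitizationPow hn (hform a)
  have hfst : Function.Injective h.fst := doubleCentralizer_fst_injective hh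
  have hsurj : Function.Surjective J :=
    surjective_of_span_range_eq_top (T := (h.fst : B →ₗ[ℂ] B)) hfst
      (fun a => ⟨_, (hP a).symm⟩) hspan
  have hideal (a x : A) (ha : J a = 0) : J (a * x) = 0 ∧ J (x * a) = 0 :=
    hJ.map_mul_eq_zero_of_semiprime hsurj (fun _ => eq_zero_of_forall_mul_mul_self_eq_zero) ha x
  refine ⟨hJ.isClosed_ker hsurj, hideal, fun hinj a ha hPa => ?_, fun hpos => ?_⟩
  · have hJpow := (map_eq_zero_iff h.fst hfst).1 ((hP a).symm.trans hPa)
    exact eq_zero_of_unitizationPow_eq_zero (.of_nonneg ha) hn ((map_eq_zero_iff J hinj).1 hJpow)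
  · refine (injective_iff_map_eq_zero J).2 fun a ha => (CStarRing.star_mul_self_eq_zero_iff a).1 ?_
    refine hpos _ (star_mul_self_nonneg a) (doubleCentralizer_coe_injective (𝕜 := ℂ) ?_)
    have hzero : ((0 : B) : 𝓜(ℂ, B)) = 0 := map_zero (DoubleCentralizer.coeHom (𝕜 := ℂ) (A := B))
    simp only [hform, (hideal a (star a) ha).2, hzero, zero_pow hn, mul_zero]

/-- let `J : A → B` be a Jordan homomorphism with `P(a) = hJ(a)ⁿ` for an
invertible central multiplier `h` of `B`, where `B = span P(A)` and `P` preserves zero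
products.  Then `ker J` is a closed two-sided ideal, and `J` is injective iff `P` has
trivial positive kernel. -/
theorem stmt_14 {A B : Type*}
    [NonUnitalCStarAlgebra A] [PartialOrder A] [StarOrderedRing A]
    [NonUnitalCStarAlgebra B]
    (n : ℕ) (hn : 0 < n) (P : A → B) (J : A →ₗ[ℂ] B)
    (hJordan : ∀ a b : A, J (a * b + b * a) = J a * J b + J b * J a)
    (h : 𝓜(ℂ, B)) (hinv : Invertible h)
    (hcentral : ∀ m : 𝓜(ℂ, B), h * m = m * h)
    (hform : ∀ a : A, (P a : 𝓜(ℂ, B)) = h * ((J a : 𝓜(ℂ, B)) ^ n))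
    (hspan : Submodule.span ℂ (Set.range P) = ⊤)
    (hzp : ∀ a b : A, a * b = 0 → P a * P b = 0) :
    IsClosed {a : A | J a = 0} ∧
    (∀ a x : A, J a = 0 → J (a * x) = 0 ∧ J (x * a) = 0) ∧
    (Function.Injective J ↔ ∀ a : A, 0 ≤ a → P a = 0 → a = 0) :=
  stmt_14_general hn.ne' hJordan (isUnit_of_invertible h) hform hspan
end

section
/- Let A be a non-commutative C*-algebra. Then there exist elements a, b in A with ab = 0 but bⁿaⁿ ≠ 0 for every positive integer n. -/
/-- `nupow a n` is the `n`-th power `aⁿ` of `a` (for `n ≥ 1`) in a possibly non-unital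
ring: `nupow a 1 = a`, `nupow a (k+1) = a * nupow a k`. -/
def nupow {A : Type*} [NonUnitalRing A] (a : A) : ℕ → A
  | 0 => a
  | 1 => a
  | (k + 2) => a * nupow a (k + 1)

/-!
By Kaplansky's theorem a non-commutative C⋆-algebra contains some `x ≠ 0` with `x² = 0`. Put
`a = x x⋆` and `b = x⋆ + x⋆ x`. Then `a b = 0` because `(x⋆)² = 0`, whereas
`bⁿ aⁿ x = (x⋆ x)²ⁿ`, which is nonzero because a nonzero self-adjoint element is not nilpotent.

For Kaplansky's theorem, let `h` be self-adjoint in a reduced unital C⋆-algebra and write `ad h` for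
the map `y ↦ ⁅h, y⁆`. If `u v = 0`, then `u y v = v y u = 0` for all `y` by reducedness, so
`(ad (u - v))² = (ad u)² + (ad v)²`. Apply this to `h = h⁺ - h⁻`: up to scalars, which `ad` ignores,
`h⁺` and `h⁻` have norm at most `‖h‖ / 2`, so iterating `n` times gives
`‖(ad h)² y‖ ≤ 2ⁿ · 4 (‖h‖ / 2ⁿ)² ‖y‖`. Hence `(ad h)² = 0`, and the Leibniz rule for `(ad h)² (y²)`
yields `⁅h, y⁆² = 0`, so `⁅h, y⁆ = 0`.
-/

open Filter
open scoped ComplexStarModule Topology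

theorem mul_mul_eq_zero_of_mul_eq_zero {M₀ : Type*} [MonoidWithZero M₀] [IsReduced M₀] {u v : M₀}
    (huv : u * v = 0) (y : M₀) : v * y * u = 0 := by
  refine eq_zero_of_pow_eq_zero (n := 2) ?_
  calc (v * y * u) ^ 2 = v * y * (u * v) * (y * u) := by simp only [sq, mul_assoc]
    _ = 0 := by simp only [huv, mul_zero, zero_mul]

section Ring

variable {R : Type*} [Ring R]

theorem lie_lie_sub_of_mul_eq_zero [IsReduced R] {u v : R} (huv : u * v = 0) (y : R) :
    ⁅u - v, ⁅u - v, y⁆⁆ = ⁅u, ⁅u, y⁆⁆ + ⁅v, ⁅v, y⁆⁆ := by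
  have hvu : v * u = 0 := by simpa using mul_mul_eq_zero_of_mul_eq_zero huv 1
  have huyv : u * y * v = 0 := mul_mul_eq_zero_of_mul_eq_zero hvu y
  have hvyu : v * y * u = 0 := mul_mul_eq_zero_of_mul_eq_zero huv y
  have expand : ⁅u - v, ⁅u - v, y⁆⁆ = ⁅u, ⁅u, y⁆⁆ + ⁅v, ⁅v, y⁆⁆
      - (u * v) * y - (v * u) * y - y * (u * v) - y * (v * u)
      + 2 • (u * y * v) + 2 • (v * y * u) := by
    simp only [Ring.lie_def]
    noncomm_ring
  simpa [huv, hvu, huyv, hvyu] using expand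

theorem commute_of_forall_lie_lie_eq_zero [IsReduced R] [IsAddTorsionFree R] {h : R}
    (had : ∀ y : R, ⁅h, ⁅h, y⁆⁆ = 0) (y : R) : Commute h y := by
  have leibniz : ⁅h, ⁅h, y * y⁆⁆ = ⁅h, ⁅h, y⁆⁆ * y + 2 • ⁅h, y⁆ ^ 2 + y * ⁅h, ⁅h, y⁆⁆ := by
    simp only [Ring.lie_def]
    noncomm_ring
  have hsq : 2 • ⁅h, y⁆ ^ 2 = 0 := by simpa [had] using leibniz.symm
  exact commute_iff_lie_eq.2 <|
    eq_zero_of_pow_eq_zero ((nsmul_eq_zero_iff_right two_ne_zero).1 hsq)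

end Ring

theorem sub_algebraMap_lie {K R : Type*} [CommSemiring K] [Ring R] [Algebra K R] (h y : R) (c : K) :
    ⁅h - algebraMap K R c, y⁆ = ⁅h, y⁆ := by
  simp only [Ring.lie_def, sub_mul, mul_sub, Algebra.commutes, sub_sub_sub_cancel_right]

theorem pow_mul_pow_mul_of_mul_self_eq_zero {R : Type*} [Semiring R] {x y : R} (hx : x * x = 0)
    (hy : y * y = 0) (n : ℕ) :
    (y + y * x) ^ (n + 1) * (x * y) ^ (n + 1) * x = (y * x) ^ (2 * (n + 1)) := by
  have hsq : (y + y * x) * (y + y * x) = y * x * (y + y * x) := by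
    rw [add_mul, mul_add y, ← mul_assoc y y, hy, zero_mul, add_zero, zero_add]
  have hpow : (y + y * x) ^ (n + 1) = (y * x) ^ n * (y + y * x) := by
    induction n with
    | zero => simp
    | succ n ih => rw [pow_succ, ih, mul_assoc, hsq, ← mul_assoc, ← pow_succ]
  have hswap : (x * y) ^ (n + 1) * x = x * (y * x) ^ (n + 1) :=
    (SemiconjBy.pow_right (show SemiconjBy x (y * x) (x * y) from (mul_assoc x y x).symm) _).symm
  calc (y + y * x) ^ (n + 1) * (x * y) ^ (n + 1) * x
      = (y * x) ^ n * (y * x + y * (x * x)) * (y * x) ^ (n + 1) := by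
        rw [hpow, mul_assoc, hswap]
        simp only [mul_add, add_mul, mul_assoc]
    _ = (y * x) ^ (2 * (n + 1)) := by
        rw [hx, mul_zero, add_zero, ← pow_succ, ← pow_add, ← two_mul]

section Norm

theorem norm_lie_le {R : Type*} [NonUnitalSeminormedRing R] (x y : R) : ‖⁅x, y⁆‖ ≤ 2 * ‖x‖ * ‖y‖ :=
  calc ‖x * y - y * x‖ ≤ ‖x * y‖ + ‖y * x‖ := norm_sub_le _ _
    _ ≤ ‖x‖ * ‖y‖ + ‖y‖ * ‖x‖ := add_le_add (norm_mul_le x y) (norm_mul_le y x)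
    _ = 2 * ‖x‖ * ‖y‖ := by ring

theorem eq_zero_of_isSelfAdjoint_of_isNilpotent {R : Type*} [NormedRing R] [StarRing R]
    [CStarRing R] {p : R} (hp : IsSelfAdjoint p) (hnil : IsNilpotent p) : p = 0 := by
  obtain ⟨n, hn⟩ := hnil
  have hpow : p ^ 2 ^ n = 0 := pow_eq_zero_of_le Nat.lt_two_pow_self.le hn
  have hnorm : ‖p‖ ^ 2 ^ n = 0 := by rw [← hp.norm_pow_two_pow, hpow, norm_zero]
  exact norm_eq_zero.1 (eq_zero_of_pow_eq_zero hnorm)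

end Norm

section Kaplansky

variable {B : Type*} [CStarAlgebra B]

theorem norm_posPart_sub_algebraMap_le {h : B} (hh : IsSelfAdjoint h) :
    ‖h⁺ - algebraMap ℝ B (‖h‖ / 2)‖ ≤ ‖h‖ / 2 := by
  nontriviality B
  have hcfc : h⁺ - algebraMap ℝ B (‖h‖ / 2) = cfc (fun t : ℝ ↦ t⁺ - ‖h‖ / 2) h := by
    rw [cfc_sub .., cfc_const .., CFC.posPart_def, cfcₙ_eq_cfc]
  rw [hcfc]
  refine norm_cfc_le (by positivity) fun t ht ↦ ?_
  have ht_le : t ≤ ‖h‖ := (le_abs_self t).trans (spectrum.norm_le_norm_of_mem ht)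
  have hpos_le : t⁺ ≤ ‖h‖ := sup_le ht_le (norm_nonneg h)
  rw [Real.norm_eq_abs, abs_le]
  constructor <;> linarith [posPart_nonneg t]

theorem norm_lie_lie_le_div_two_pow [IsReduced B] (n : ℕ) {h : B} (hh : IsSelfAdjoint h) (y : B) :
    ‖⁅h, ⁅h, y⁆⁆‖ ≤ 4 * ‖h‖ ^ 2 * ‖y‖ / 2 ^ n := by
  induction n generalizing h with
  | zero =>
    calc ‖⁅h, ⁅h, y⁆⁆‖ ≤ 2 * ‖h‖ * (2 * ‖h‖ * ‖y‖) :=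
          (norm_lie_le _ _).trans (by gcongr; exact norm_lie_le _ _)
      _ = 4 * ‖h‖ ^ 2 * ‖y‖ / 2 ^ 0 := by ring
  | succ n ih =>
    have posPart_le {k : B} (hk : IsSelfAdjoint k) :
        ‖⁅k⁺, ⁅k⁺, y⁆⁆‖ ≤ 4 * (‖k‖ / 2) ^ 2 * ‖y‖ / 2 ^ n := by
      set c : B := algebraMap ℝ B (‖k‖ / 2)
      have hsa : IsSelfAdjoint (k⁺ - c) :=
        (cfcₙ_predicate (R := ℝ) _ k).sub (.algebraMap B (.all _))
      have hshift : ‖⁅k⁺, ⁅k⁺, y⁆⁆‖ ≤ 4 * ‖k⁺ - c‖ ^ 2 * ‖y‖ / 2 ^ n := by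
        simpa only [c, sub_algebraMap_lie] using ih hsa
      refine hshift.trans ?_
      gcongr
      exact norm_posPart_sub_algebraMap_le hk
    have negPart_le : ‖⁅h⁻, ⁅h⁻, y⁆⁆‖ ≤ 4 * (‖h‖ / 2) ^ 2 * ‖y‖ / 2 ^ n := by
      simpa only [CFC.posPart_neg, norm_neg] using posPart_le hh.neg
    calc ‖⁅h, ⁅h, y⁆⁆‖ = ‖⁅h⁺, ⁅h⁺, y⁆⁆ + ⁅h⁻, ⁅h⁻, y⁆⁆‖ := by
          rw [← lie_lie_sub_of_mul_eq_zero (CFC.posPart_mul_negPart h), CFC.posPart_sub_negPart h]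
      _ ≤ 4 * (‖h‖ / 2) ^ 2 * ‖y‖ / 2 ^ n + 4 * (‖h‖ / 2) ^ 2 * ‖y‖ / 2 ^ n :=
          norm_add_le_of_le (posPart_le hh) negPart_le
      _ = 4 * ‖h‖ ^ 2 * ‖y‖ / 2 ^ (n + 1) := by ring

theorem commute_of_isSelfAdjoint_of_isReduced [IsReduced B] {h : B} (hh : IsSelfAdjoint h)
    (y : B) : Commute h y := by
  have : IsAddTorsionFree B := .of_isTorsionFree ℝ B
  refine commute_of_forall_lie_lie_eq_zero (fun z ↦ norm_le_zero_iff.1 ?_) y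
  have hlim : Tendsto (fun n : ℕ ↦ 4 * ‖h‖ ^ 2 * ‖z‖ / 2 ^ n) atTop (𝓝 0) :=
    tendsto_const_nhds.div_atTop (tendsto_pow_atTop_atTop_of_one_lt one_lt_two)
  exact ge_of_tendsto' hlim fun n ↦ norm_lie_lie_le_div_two_pow n hh z

theorem commute_of_isReduced [IsReduced B] (x y : B) : Commute x y := by
  rw [← realPart_add_I_smul_imaginaryPart x]
  exact (commute_of_isSelfAdjoint_of_isReduced (ℜ x).2 y).add_left
    ((commute_of_isSelfAdjoint_of_isReduced (ℑ x).2 y).smul_left Complex.I)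

end Kaplansky

section Unitization

variable {R A : Type*} [CommRing R] [NonUnitalRing A] [Module R A] [IsScalarTower R A A]
  [SMulCommClass R A A]

theorem isReduced_unitization [IsReduced R] (hA : ∀ x : A, x * x = 0 → x = 0) :
    IsReduced (Unitization R A) := by
  refine (isReduced_iff_pow_one_lt 2 one_lt_two).2 fun x hx ↦ ?_
  rw [sq] at hx
  have hfst : x.fst = 0 := eq_zero_of_pow_eq_zero (n := 2)
    (by simpa [sq] using congrArg (·.fst) hx)
  have hsnd : x.snd = 0 := hA _ (by simpa [hfst] using congrArg (·.snd) hx)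
  exact Unitization.ext hfst hsnd

theorem inr_nupow_succ (a : A) (n : ℕ) :
    ((nupow a (n + 1) : A) : Unitization R A) = (a : Unitization R A) ^ (n + 1) := by
  induction n with
  | zero => simp [nupow]
  | succ n ih => rw [nupow, Unitization.inr_mul, ih, ← pow_succ']

end Unitization

section NonUnital

variable {A : Type*} [NonUnitalCStarAlgebra A]

theorem exists_ne_zero_mul_self_eq_zero (hnc : ¬ ∀ a b : A, a * b = b * a) :
    ∃ x : A, x ≠ 0 ∧ x * x = 0 := by
  contrapose! hnc
  have : IsReduced (Unitization ℂ A) :=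
    isReduced_unitization fun x ↦ not_imp_not.1 (hnc x)
  intro a b
  have hcomm : (a : Unitization ℂ A) * b = b * a := commute_of_isReduced _ _
  exact Unitization.inr_injective (R := ℂ) (by simpa only [Unitization.inr_mul] using hcomm)

theorem nupow_mul_nupow_ne_zero {x : A} (hx0 : x ≠ 0) (hxx : x * x = 0) (n : ℕ) :
    nupow (star x + star x * x) (n + 1) * nupow (x * star x) (n + 1) ≠ 0 := by
  intro hzero
  let X : Unitization ℂ A := x
  have hXX : X * X = 0 := by rw [← Unitization.inr_mul, hxx, Unitization.inr_zero]
  have hSS : star X * star X = 0 := by rw [← star_mul, hXX, star_zero]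
  have hzero' : (star X + star X * X) ^ (n + 1) * (X * star X) ^ (n + 1) = 0 := by
    simpa [X, inr_nupow_succ] using congrArg (Unitization.inr (R := ℂ)) hzero
  have hnil : (star X * X) ^ (2 * (n + 1)) = 0 := by
    rw [← pow_mul_pow_mul_of_mul_self_eq_zero hXX hSS, hzero', zero_mul]
  have hXX' : star X * X = 0 :=
    eq_zero_of_isSelfAdjoint_of_isNilpotent (.star_mul_self X) ⟨_, hnil⟩
  exact hx0 (Unitization.inr_injective ((CStarRing.star_mul_self_eq_zero_iff X).1 hXX'))

end NonUnital

/-- in a non-commutative C*-algebra there exist `a`, `b` with `ab = 0`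
but `bⁿaⁿ ≠ 0` for every positive integer `n`. -/
theorem stmt_15 {A : Type*} [NonUnitalCStarAlgebra A]
    (hnc : ¬ ∀ a b : A, a * b = b * a) :
    ∃ a b : A, a * b = 0 ∧ ∀ n : ℕ, 0 < n → nupow b n * nupow a n ≠ 0 := by
  obtain ⟨x, hx0, hxx⟩ := exists_ne_zero_mul_self_eq_zero hnc
  have hss : star x * star x = 0 := by rw [← star_mul, hxx, star_zero]
  refine ⟨x * star x, star x + star x * x, ?_, fun n hn ↦ ?_⟩
  · calc x * star x * (star x + star x * x)
        = x * (star x * star x) + x * (star x * star x) * x := by simp only [mul_add, mul_assoc]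
      _ = 0 := by simp only [hss, mul_zero, zero_mul, add_zero]
  · obtain ⟨k, rfl⟩ := Nat.exists_eq_add_one_of_ne_zero hn.ne'
    exact nupow_mul_nupow_ne_zero hx0 hxx k
end

section
/- Let X, Y be locally compact Hausdorff spaces and P : C₀(X) → C₀(Y) an orthogonally additive n-homogeneous polynomial which is an n-isometry on positive elements (‖P(f)‖ = ‖f‖ⁿ for f ≥ 0) and whose range is regular. Then there exist a continuous unimodular function h on Y and a homeomorphism φ : Y → X such that P(f)(y) = h(y)(f(φ(y)))ⁿ for all f ∈ C₀(X) and y ∈ Y. -/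
open scoped ZeroAtInfty ComplexOrder

/-!
Let `L` be the symmetric `n`-linear map with `P f = L (f, …, f)`. By polarization, orthogonal
additivity makes `L` vanish as soon as its arguments split into two mutually orthogonal groups, and
cutting arguments along level bands improves this to: `L` vanishes as soon as two of its arguments
are orthogonal. A bounded bilinear map on bounded real functions that vanishes on orthogonal pairs
satisfies `B r 1 = B 1 r`, because every bound on the norm of the difference can be halved. Hence
factors move freely between the arguments of `L`, and `L` depends only on their product: locally,
`P u = T (uⁿ)` with `T` linear.

Because of the `n`-th power, averages of values of `P` at peak functions at `x` are again values of
`P` at peak functions at `x`. Strict convexity of the unit ball of the scalars and compactness then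
give a point `ψ x` and a unimodular `c x` with `P f (ψ x) = c x` for all peak functions `f` at `x`,
and since peak functions span, `P f (ψ x) = c x * f x ^ n` for all `f`. Regularity of the range
makes `ψ` a homeomorphism; its inverse is the required `φ`.
-/

open Finset
open scoped BoundedContinuousFunction Topology

section Polarization

variable {ι : Type*} [Fintype ι] [DecidableEq ι]

lemma sum_neg_one_pow_card_smul_eq_zero {F : Type*} [AddCommGroup F] (G : Finset ι → F) (j : ι)
    (hG : ∀ s, G (insert j s) = G s) : ∑ s : Finset ι, (-1 : ℤ) ^ #s • G s = 0 := by
  rw [← powerset_univ, ← insert_erase (mem_univ j), sum_powerset_insert (notMem_erase j _),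
    ← sum_add_distrib]
  refine sum_eq_zero fun s hs ↦ ?_
  rw [hG, card_insert_of_notMem fun hj ↦ notMem_erase j univ (mem_powerset.1 hs hj), pow_succ]
  simp

lemma sum_neg_one_pow_card_smul_indicator_range {F : Type*} [AddCommGroup F] (r : ι → ι) (c : F) :
    ∑ s : Finset ι, (-1 : ℤ) ^ #s • (if ∀ i, r i ∈ s then c else 0) =
      if r.Bijective then (-1 : ℤ) ^ Fintype.card ι • c else 0 := by
  split_ifs with hr
  · rw [Fintype.sum_eq_single univ fun s hs ↦ ?_]
    · simp
    · rw [if_neg fun h ↦ hs (eq_univ_of_forall fun j ↦ ?_), smul_zero]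
      obtain ⟨i, rfl⟩ := hr.surjective j
      exact h i
  · obtain ⟨j, hj⟩ : ∃ j, ∀ i, r i ≠ j := by
      simpa only [← Finite.surjective_iff_bijective, Function.Surjective, not_forall,
        not_exists] using hr
    exact sum_neg_one_pow_card_smul_eq_zero _ j fun s ↦ by simp [hj]

lemma sum_neg_one_pow_card_smul_diagonal {R E F : Type*} [CommSemiring R] [AddCommMonoid E]
    [Module R E] [AddCommGroup F] [Module R F] (L : MultilinearMap R (fun _ : ι ↦ E) F)
    (v : ι → E) :
    ∑ s : Finset ι, (-1 : ℤ) ^ #s • L (fun _ ↦ ∑ j ∈ s, v j) =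
      (-1 : ℤ) ^ Fintype.card ι • ∑ σ : Equiv.Perm ι, L (v ∘ σ) := by
  have expand (s : Finset ι) :
      L (fun _ ↦ ∑ j ∈ s, v j) = ∑ r : ι → ι, if ∀ i, r i ∈ s then L (v ∘ r) else 0 := by
    rw [L.map_sum_finset (fun _ ↦ v) fun _ ↦ s, ← sum_filter]
    exact sum_congr (by ext; simp) fun _ _ ↦ rfl
  calc ∑ s : Finset ι, (-1 : ℤ) ^ #s • L (fun _ ↦ ∑ j ∈ s, v j)
      = ∑ r : ι → ι, ∑ s : Finset ι, (-1 : ℤ) ^ #s • if ∀ i, r i ∈ s then L (v ∘ r) else 0 := by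
        simp only [expand, smul_sum]
        exact sum_comm
    _ = ∑ r : ι → ι with r.Bijective, (-1 : ℤ) ^ Fintype.card ι • L (v ∘ r) := by
        simp only [sum_neg_one_pow_card_smul_indicator_range, sum_filter]
    _ = (-1 : ℤ) ^ Fintype.card ι • ∑ σ : Equiv.Perm ι, L (v ∘ σ) := by
        rw [smul_sum]
        refine sum_bij' (fun r hr ↦ .ofBijective r (mem_filter.1 hr).2) (fun σ _ ↦ σ) ?_ ?_ ?_ ?_ ?_
          <;> simp

end Polarization

/-- Additivity on pairs of elements with zero product. -/
def IsOrthAdditive {E F : Type*} [Mul E] [Zero E] [Add E] [Add F] (P : E → F) : Prop :=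
  ∀ f g : E, f * g = 0 → P (f + g) = P f + P g

/-- Invariance of a map of several variables under permutations of its arguments, together with
orthogonal additivity of its restriction to the diagonal. For a multilinear map `L` this says that
`L` is the polar form of an orthogonally additive homogeneous polynomial. -/
structure IsOrthPolar {ι E F : Type*} [Mul E] [Zero E] [Add E] [Add F] (L : (ι → E) → F) :
    Prop where
  perm (v : ι → E) (σ : Equiv.Perm ι) : L (v ∘ σ) = L v
  diagonal : IsOrthAdditive fun f ↦ L fun _ ↦ f

namespace IsOrthPolar

variable {ι : Type*} [Finite ι]

lemma eq_zero_of_orthogonal_split {R E F : Type*} [CommSemiring R] [NonUnitalNonAssocSemiring E]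
    [Module R E] [AddCommGroup F] [Module R F] [IsAddTorsionFree F]
    {L : MultilinearMap R (fun _ : ι ↦ E) F} (hL : IsOrthPolar L) {v : ι → E} {A : Set ι} {a b : ι}
    (ha : a ∈ A) (hb : b ∉ A) (hv : ∀ i ∈ A, ∀ j ∉ A, v i * v j = 0) : L v = 0 := by
  classical
  cases nonempty_fintype ι
  have split (s : Finset ι) : L (fun _ ↦ ∑ j ∈ s, v j) =
      L (fun _ ↦ ∑ j ∈ s with j ∈ A, v j) + L fun _ ↦ ∑ j ∈ s with j ∉ A, v j := by
    rw [← sum_filter_add_sum_filter_not s (· ∈ A)]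
    refine hL.diagonal _ _ ?_
    rw [sum_mul_sum]
    exact sum_eq_zero fun i hi ↦ sum_eq_zero fun j hj ↦
      hv i (mem_filter.1 hi).2 j (mem_filter.1 hj).2
  have alternating := calc
    ∑ s : Finset ι, (-1 : ℤ) ^ #s • L (fun _ ↦ ∑ j ∈ s, v j)
      = ∑ s : Finset ι, (-1 : ℤ) ^ #s • L (fun _ ↦ ∑ j ∈ s with j ∈ A, v j) +
          ∑ s : Finset ι, (-1 : ℤ) ^ #s • L (fun _ ↦ ∑ j ∈ s with j ∉ A, v j) := by
        rw [← sum_add_distrib]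
        exact sum_congr rfl fun s _ ↦ by rw [split, smul_add]
    _ = 0 := by
        rw [sum_neg_one_pow_card_smul_eq_zero _ b fun s ↦ by rw [filter_insert, if_neg hb],
          sum_neg_one_pow_card_smul_eq_zero _ a fun s ↦ by
            rw [filter_insert, if_neg (not_not.2 ha)],
          add_zero]
  rw [sum_neg_one_pow_card_smul_diagonal] at alternating
  simpa [hL.perm, Fintype.card_perm, Nat.factorial_ne_zero] using alternating

end IsOrthPolar

section UnitFunctions

variable {X : Type*} [TopologicalSpace X]

/-- The continuous function `s`, truncated below at `0` and above at `1`. -/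
noncomputable def clampUnit (s : C(X, ℝ)) : X →ᵇ ℝ :=
  .ofNormedAddCommGroup (fun x ↦ max 0 (min 1 (s x))) (by fun_prop) 1 fun x ↦ by
    rw [Real.norm_of_nonneg (le_max_left _ _)]
    exact max_le zero_le_one (min_le_left _ _)

lemma clampUnit_apply (s : C(X, ℝ)) (x : X) : clampUnit s x = max 0 (min 1 (s x)) := rfl

lemma clampUnit_mem_Icc (s : C(X, ℝ)) : clampUnit s ∈ Set.Icc 0 1 :=
  ⟨fun _ ↦ le_max_left _ _, fun _ ↦ max_le zero_le_one (min_le_left _ _)⟩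

lemma clampUnit_of_nonpos {s : C(X, ℝ)} {x : X} (h : s x ≤ 0) : clampUnit s x = 0 := by
  rw [clampUnit_apply, min_eq_right (h.trans zero_le_one), max_eq_left h]

lemma clampUnit_of_one_le {s : C(X, ℝ)} {x : X} (h : 1 ≤ s x) : clampUnit s x = 1 := by
  rw [clampUnit_apply, min_eq_left h, max_eq_right zero_le_one]

lemma clampUnit_mono {s t : C(X, ℝ)} (h : ∀ x, s x ≤ t x) : clampUnit s ≤ clampUnit t := fun x ↦
  max_le_max_left 0 (min_le_min_left 1 (h x))

lemma clampUnit_mul_one_sub_eq_zero {s t : C(X, ℝ)} (h : ∀ x, s x + 1 ≤ t x) :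
    clampUnit s * (1 - clampUnit t) = 0 := by
  ext x
  obtain hx | hx := le_total (s x) 0
  · simp [clampUnit_of_nonpos hx]
  · simp [clampUnit_of_one_le (show 1 ≤ t x by linarith [h x])]

variable {𝕜 : Type*} [RCLike 𝕜]

variable (X 𝕜) in
/-- The embedding of the real bounded continuous functions into the `𝕜`-valued ones. -/
noncomputable def realEmbedding : (X →ᵇ ℝ) →L[ℝ] (X →ᵇ 𝕜) :=
  RCLike.ofRealCLM.compLeftContinuousBounded X

@[simp]
lemma realEmbedding_apply (g : X →ᵇ ℝ) (x : X) : realEmbedding X 𝕜 g x = g x := rfl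

lemma realEmbedding_mul (f g : X →ᵇ ℝ) :
    realEmbedding X 𝕜 (f * g) = realEmbedding X 𝕜 f * realEmbedding X 𝕜 g := by
  ext x
  simp

lemma realEmbedding_one : realEmbedding X 𝕜 1 = 1 := by
  ext x
  simp

lemma realEmbedding_pow (g : X →ᵇ ℝ) (n : ℕ) :
    realEmbedding X 𝕜 (g ^ n) = realEmbedding X 𝕜 g ^ n := by
  ext x
  simp

lemma realEmbedding_smul (c : ℝ) (g : X →ᵇ ℝ) :
    realEmbedding X 𝕜 (c • g) = (c : 𝕜) • realEmbedding X 𝕜 g := by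
  ext x
  simp

lemma norm_realEmbedding_le (g : X →ᵇ ℝ) : ‖realEmbedding X 𝕜 g‖ ≤ ‖g‖ :=
  (BoundedContinuousFunction.norm_le (norm_nonneg g)).2 fun x ↦
    (RCLike.norm_ofReal (g x)).trans_le (g.norm_coe_le_norm x)

lemma norm_realEmbedding_apply_le_one {g : X →ᵇ ℝ} (hg : g ∈ Set.Icc 0 1) (x : X) :
    ‖realEmbedding X 𝕜 g x‖ ≤ 1 :=
  (RCLike.norm_of_nonneg (hg.1 x)).trans_le (hg.2 x)

lemma exists_eq_one_of_le_eq_zero_of_ge (s : C(X, ℝ)) {γ δ : ℝ} (h : γ < δ) :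
    ∃ φ : X →ᵇ 𝕜, (∀ x, ‖φ x‖ ≤ 1) ∧ (∀ x, s x ≤ γ → φ x = 1) ∧ ∀ x, δ ≤ s x → φ x = 0 := by
  have h0 : 0 < δ - γ := sub_pos.2 h
  refine ⟨realEmbedding X 𝕜 (clampUnit ⟨fun x ↦ (δ - s x) / (δ - γ), by fun_prop⟩),
    norm_realEmbedding_apply_le_one (clampUnit_mem_Icc _), fun x hx ↦ ?_, fun x hx ↦ ?_⟩
  · rw [realEmbedding_apply, clampUnit_of_one_le, RCLike.ofReal_one]
    exact (one_le_div h0).2 (sub_le_sub_left hx δ)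
  · rw [realEmbedding_apply, clampUnit_of_nonpos, RCLike.ofReal_zero]
    exact div_nonpos_of_nonpos_of_nonneg (sub_nonpos.2 hx) h0.le

lemma exists_dist_lt_eq_zero_of_norm_lt (f : X →ᵇ 𝕜) {ε : ℝ} (hε : 0 < ε) :
    ∃ g : X →ᵇ 𝕜, dist f g < ε ∧ ∃ δ > 0, ∀ x, ‖f x‖ < δ → g x = 0 := by
  have hε2 : 0 < ε / 2 := half_pos hε
  obtain ⟨φ, hφ, hφ_one, hφ_zero⟩ := exists_eq_one_of_le_eq_zero_of_ge (𝕜 := 𝕜)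
    ⟨fun x ↦ ‖f x‖, by fun_prop⟩ (half_lt_self hε2)
  refine ⟨f - φ * f, ?_, ε / 2 / 2, half_pos hε2, fun x hx ↦ by simp [hφ_one x hx.le]⟩
  rw [dist_eq_norm, sub_sub_cancel]
  refine ((BoundedContinuousFunction.norm_le hε2.le).2 fun x ↦ ?_).trans_lt (half_lt_self hε)
  rw [BoundedContinuousFunction.mul_apply, norm_mul]
  obtain hx | hx := le_total (ε / 2) ‖f x‖
  · simp [hφ_zero x hx, hε2.le]
  · exact (mul_le_of_le_one_left (norm_nonneg _) (hφ x)).trans hx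

end UnitFunctions

namespace IsOrthPolar

variable {ι X 𝕜 F : Type*} [Finite ι] [TopologicalSpace X] [RCLike 𝕜]

/-- Each argument with index in `S` is cut along an intermediate level band of `s` into a part that
joins the low arguments and a part that joins the high ones. -/
lemma eq_zero_of_separated_of_notMem [AddCommGroup F] [Module 𝕜 F]
    {L : MultilinearMap 𝕜 (fun _ : ι ↦ X →ᵇ 𝕜) F} (hL : IsOrthPolar L) (s : C(X, ℝ))
    (S : Finset ι) {α β : ℝ} (hαβ : α < β) {v : ι → X →ᵇ 𝕜} {A : Set ι} {a b : ι}
    (ha : a ∈ A) (haS : a ∉ S) (hb : b ∉ A) (hbS : b ∉ S)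
    (low : ∀ i ∉ S, i ∈ A → ∀ x, α < s x → v i x = 0)
    (high : ∀ i ∉ S, i ∉ A → ∀ x, s x < β → v i x = 0) : L v = 0 := by
  classical
  induction S using Finset.induction_on generalizing α β v A with
  | empty =>
    have : IsAddTorsionFree F := .of_isTorsionFree 𝕜 F
    refine hL.eq_zero_of_orthogonal_split ha hb fun i hi j hj ↦ ?_
    ext x
    obtain hx | hx := lt_or_ge α (s x)
    · simp [low i (notMem_empty i) hi x hx]
    · simp [high j (notMem_empty j) hj x (hx.trans_lt hαβ)]
  | insert k S _ ih =>
    obtain ⟨γ, hαγ, hγβ⟩ := exists_between hαβ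
    obtain ⟨δ, hγδ, hδβ⟩ := exists_between hγβ
    obtain ⟨φ, -, hφ_one, hφ_zero⟩ := exists_eq_one_of_le_eq_zero_of_ge (𝕜 := 𝕜) s hγδ
    obtain ⟨hak, haS⟩ := not_or.1 (mem_insert.not.1 haS)
    obtain ⟨hbk, hbS⟩ := not_or.1 (mem_insert.not.1 hbS)
    have low_part : L (Function.update v k (φ * v k)) = 0 := by
      refine ih hδβ (A := insert k A) (.inr ha) haS (by simp [hbk, hb]) hbS ?_ ?_
      · intro i hiS hi x hx
        obtain rfl | hik := eq_or_ne i k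
        · simp [hφ_zero x hx.le]
        · rw [Function.update_of_ne hik]
          exact low i (by simp [hik, hiS]) (hi.resolve_left hik) x (by linarith)
      · intro i hiS hi x hx
        obtain ⟨hik, hiA⟩ := not_or.1 hi
        rw [Function.update_of_ne hik]
        exact high i (by simp [hik, hiS]) hiA x hx
    have high_part : L (Function.update v k ((1 - φ) * v k)) = 0 := by
      refine ih hαγ (A := A \ {k}) ⟨ha, hak⟩ haS (fun h ↦ hb h.1) hbS ?_ ?_
      · intro i hiS hi x hx
        rw [Function.update_of_ne hi.2]
        exact low i (by simpa [hiS] using hi.2) hi.1 x hx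
      · intro i hiS hi x hx
        obtain rfl | hik := eq_or_ne i k
        · simp [hφ_one x hx.le]
        · rw [Function.update_of_ne hik]
          exact high i (by simp [hik, hiS]) (fun h ↦ hi ⟨h, hik⟩) x (by linarith)
    calc L v = L (Function.update v k (φ * v k + (1 - φ) * v k)) := by
          rw [← add_mul, add_sub_cancel, one_mul, Function.update_eq_self]
      _ = 0 := by rw [L.map_update_add, low_part, high_part, add_zero]

/-- After a small perturbation of `v b` there is a gap between the levels `‖v b x‖ = 0` and
`‖v b x‖ = δ`, on which the level bands can be placed. -/
theorem eq_zero_of_mul_eq_zero [NormedAddCommGroup F] [NormedSpace 𝕜 F]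
    {L : ContinuousMultilinearMap 𝕜 (fun _ : ι ↦ X →ᵇ 𝕜) F} (hL : IsOrthPolar L)
    {v : ι → X →ᵇ 𝕜} {a b : ι} (hab : a ≠ b) (hv : v a * v b = 0) : L v = 0 := by
  classical
  cases nonempty_fintype ι
  have closed : IsClosed {f | L (Function.update v b f) = 0} :=
    isClosed_eq (L.cont.comp (continuous_const.update b continuous_id)) continuous_const
  suffices v b ∈ {f | L (Function.update v b f) = 0} by simpa using this
  refine closed.closure_subset (Metric.mem_closure_iff.2 fun ε hε ↦ ?_)
  obtain ⟨g, hdist, δ, hδ, hg⟩ := exists_dist_lt_eq_zero_of_norm_lt (v b) hε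
  refine ⟨g, ?_, hdist⟩
  refine eq_zero_of_separated_of_notMem (L := L.toMultilinearMap) hL ⟨fun x ↦ ‖v b x‖, by fun_prop⟩
    {a, b}ᶜ hδ (A := {a}) (a := a) (b := b) rfl (by simp) (by simpa using hab.symm) (by simp) ?_ ?_
  · rintro i - rfl x hx
    rw [Function.update_of_ne hab]
    exact (mul_eq_zero.1 (DFunLike.congr_fun hv x)).resolve_right (norm_pos_iff.1 hx)
  · intro i hi hia x hx
    obtain rfl : i = b := by simpa [show i ≠ a from hia] using hi
    rw [Function.update_self]
    exact hg x hx

end IsOrthPolar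

section ZeroProducts

variable {X F : Type*} [TopologicalSpace X] [NormedAddCommGroup F] [NormedSpace ℝ F]

/-- A bilinear map, bounded with constant `C`, that vanishes on the pairs with zero product. -/
structure VanishesOnZeroProducts (B : (X →ᵇ ℝ) →ₗ[ℝ] (X →ᵇ ℝ) →ₗ[ℝ] F) (C : ℝ) : Prop where
  bound (f g) : ‖B f g‖ ≤ C * ‖f‖ * ‖g‖
  eq_zero (f g) : f * g = 0 → B f g = 0

lemma norm_le_one_of_mem_Icc {f : X →ᵇ ℝ} (hf : f ∈ Set.Icc (-1) 1) : ‖f‖ ≤ 1 :=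
  (BoundedContinuousFunction.norm_le zero_le_one).2 fun x ↦ abs_le.2 ⟨hf.1 x, hf.2 x⟩

lemma Icc_zero_one_subset : Set.Icc (0 : X →ᵇ ℝ) 1 ⊆ Set.Icc (-1) 1 :=
  Set.Icc_subset_Icc_left fun _ ↦ neg_nonpos.2 zero_le_one

/-- The failure of `r` to move from the first argument of `B` to the second one. -/
def transferDefect (B : (X →ᵇ ℝ) →ₗ[ℝ] (X →ᵇ ℝ) →ₗ[ℝ] F) : (X →ᵇ ℝ) →ₗ[ℝ] F :=
  B.flip 1 - B 1

lemma transferDefect_apply (B : (X →ᵇ ℝ) →ₗ[ℝ] (X →ᵇ ℝ) →ₗ[ℝ] F) (r : X →ᵇ ℝ) :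
    transferDefect B r = B r 1 - B 1 r := rfl

namespace VanishesOnZeroProducts

variable {B : (X →ᵇ ℝ) →ₗ[ℝ] (X →ᵇ ℝ) →ₗ[ℝ] F} {C : ℝ}

lemma norm_transferDefect_le (hB : VanishesOnZeroProducts B C) (hC : 0 ≤ C) {r : X →ᵇ ℝ}
    (hr : r ∈ Set.Icc 0 1) : ‖transferDefect B r‖ ≤ 2 * C := by
  have hr := norm_le_one_of_mem_Icc (Icc_zero_one_subset hr)
  have h1 : ‖(1 : X →ᵇ ℝ)‖ ≤ 1 :=
    norm_le_one_of_mem_Icc (Icc_zero_one_subset ⟨fun _ ↦ zero_le_one, le_rfl⟩)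
  calc ‖B r 1 - B 1 r‖ ≤ C * ‖r‖ * ‖(1 : X →ᵇ ℝ)‖ + C * ‖(1 : X →ᵇ ℝ)‖ * ‖r‖ :=
        norm_sub_le_of_le (hB.bound _ _) (hB.bound _ _)
    _ ≤ C * 1 * 1 + C * 1 * 1 := by gcongr
    _ = 2 * C := by ring

lemma comp_mulLeft (hB : VanishesOnZeroProducts B C) (hC : 0 ≤ C) {u : X →ᵇ ℝ} (hu : ‖u‖ ≤ 1) :
    VanishesOnZeroProducts (B ∘ₗ LinearMap.mulLeft ℝ u) C where
  bound f g := (hB.bound (u * f) g).trans <| by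
    gcongr
    exact (norm_mul_le u f).trans (mul_le_of_le_one_left (norm_nonneg f) hu)
  eq_zero f g hfg := hB.eq_zero (u * f) g (by rw [mul_assoc, hfg, mul_zero])

/-- The sign change `1 - 2χ` turns a sum of two defects into the defect of a single function. -/
lemma transferDefect_add_of_nested (hB : VanishesOnZeroProducts B C) {φ χ ψ : X →ᵇ ℝ}
    (hφχ : χ * (1 - φ) = 0) (hχψ : ψ * (1 - χ) = 0) :
    transferDefect B φ + transferDefect B ψ =
      transferDefect (B ∘ₗ LinearMap.mulLeft ℝ (1 - 2 * χ)) (φ - ψ) := by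
  have hmul : (1 - 2 * χ) * (φ - ψ) = φ + ψ - χ - χ := by linear_combination 2 * hφχ - 2 * hχψ
  have h1 : (1 - 2 * χ) * 1 = 1 - χ - χ := by ring
  have hχφ : B χ 1 - B χ φ = 0 := by rw [← map_sub, hB.eq_zero _ _ hφχ]
  have hψχ : B 1 ψ - B χ ψ = 0 := by
    rw [← LinearMap.sub_apply, ← map_sub, hB.eq_zero _ _ ((mul_comm _ _).trans hχψ)]
  rw [transferDefect_apply (B ∘ₗ _)]
  simp only [LinearMap.comp_apply, LinearMap.mulLeft_apply, hmul, h1]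
  simp only [transferDefect_apply, map_sub, map_add, LinearMap.sub_apply, LinearMap.add_apply]
  linear_combination (norm := module) (2 : ℝ) • hχφ - (2 : ℝ) • hψχ

lemma norm_transferDefect_add_le (hB : VanishesOnZeroProducts B C) (hC : 0 ≤ C) {M : ℝ}
    (bound : ∀ B : (X →ᵇ ℝ) →ₗ[ℝ] (X →ᵇ ℝ) →ₗ[ℝ] F, VanishesOnZeroProducts B C →
      ∀ r ∈ Set.Icc (0 : X →ᵇ ℝ) 1, ‖transferDefect B r‖ ≤ M)
    {φ χ ψ : X →ᵇ ℝ} (hχ : χ ∈ Set.Icc 0 1) (hφψ : φ - ψ ∈ Set.Icc 0 1)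
    (hφχ : χ * (1 - φ) = 0) (hχψ : ψ * (1 - χ) = 0) :
    ‖transferDefect B φ + transferDefect B ψ‖ ≤ M := by
  have hu : ‖1 - 2 * χ‖ ≤ 1 := norm_le_one_of_mem_Icc
    ⟨fun x ↦ show -1 ≤ 1 - 2 * χ x by linarith [show χ x ≤ 1 from hχ.2 x],
      fun x ↦ show 1 - 2 * χ x ≤ 1 by linarith [show 0 ≤ χ x from hχ.1 x]⟩
  rw [hB.transferDefect_add_of_nested hφχ hχψ]
  exact bound _ (hB.comp_mulLeft hC hu) _ hφψ

/-- A bound for all defects improves by the factor `2`: cut `4r` into four nested layers, and pair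
the first with the third and the second with the fourth. -/
lemma norm_transferDefect_le_half (hB : VanishesOnZeroProducts B C) (hC : 0 ≤ C) {M : ℝ}
    (bound : ∀ B : (X →ᵇ ℝ) →ₗ[ℝ] (X →ᵇ ℝ) →ₗ[ℝ] F, VanishesOnZeroProducts B C →
      ∀ r ∈ Set.Icc (0 : X →ᵇ ℝ) 1, ‖transferDefect B r‖ ≤ M)
    {r : X →ᵇ ℝ} (hr : r ∈ Set.Icc 0 1) : ‖transferDefect B r‖ ≤ M / 2 := by
  let layer (k : ℕ) : X →ᵇ ℝ := clampUnit ⟨fun x ↦ 4 * r x - k, by fun_prop⟩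
  have layer_apply (k : ℕ) (x : X) : layer k x = max 0 (min 1 (4 * r x - k)) := rfl
  have mem (k : ℕ) : layer k ∈ Set.Icc 0 1 := clampUnit_mem_Icc _
  have anti (k : ℕ) : layer (k + 1) ≤ layer k :=
    clampUnit_mono fun x ↦ by simp [add_comm, sub_add_eq_sub_sub]
  have nested (k : ℕ) : layer (k + 1) * (1 - layer k) = 0 :=
    clampUnit_mul_one_sub_eq_zero fun x ↦ by
      simp only [ContinuousMap.coe_mk]
      push_cast
      linarith
  have sum_eq : (4 : ℝ) • r = layer 0 + layer 2 + (layer 1 + layer 3) := by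
    ext x
    have h0 : 0 ≤ r x := hr.1 x
    have h1 : r x ≤ 1 := hr.2 x
    simp only [BoundedContinuousFunction.coe_smul, BoundedContinuousFunction.add_apply,
      smul_eq_mul, layer_apply]
    push_cast
    grind
  have pair (k : ℕ) : ‖transferDefect B (layer k) + transferDefect B (layer (k + 2))‖ ≤ M :=
    hB.norm_transferDefect_add_le hC bound (mem (k + 1))
      ⟨sub_nonneg.2 ((anti (k + 1)).trans (anti k)),
        (sub_le_self _ (mem (k + 2)).1).trans (mem k).2⟩
      (nested k) (nested (k + 1))
  have four : 4 * ‖transferDefect B r‖ ≤ M + M := calc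
    4 * ‖transferDefect B r‖ = ‖transferDefect B ((4 : ℝ) • r)‖ := by
      rw [map_smul, norm_smul, Real.norm_ofNat]
    _ ≤ M + M := by
      simp only [sum_eq, map_add]
      exact norm_add_le_of_le (pair 0) (pair 1)
  linarith

theorem transferDefect_eq_zero (hB : VanishesOnZeroProducts B C) (hC : 0 ≤ C) {r : X →ᵇ ℝ}
    (hr : r ∈ Set.Icc 0 1) : transferDefect B r = 0 := by
  have bound (k : ℕ) : ∀ B : (X →ᵇ ℝ) →ₗ[ℝ] (X →ᵇ ℝ) →ₗ[ℝ] F, VanishesOnZeroProducts B C →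
      ∀ r ∈ Set.Icc (0 : X →ᵇ ℝ) 1, ‖transferDefect B r‖ ≤ 2 * C * (1 / 2) ^ k := by
    induction k with
    | zero => exact fun B hB r hr ↦ by simpa using hB.norm_transferDefect_le hC hr
    | succ k ih =>
      refine fun B hB r hr ↦ (hB.norm_transferDefect_le_half hC ih hr).trans_eq ?_
      ring
  have tendsto_zero : Filter.Tendsto (fun k : ℕ ↦ 2 * C * (1 / 2 : ℝ) ^ k) .atTop (𝓝 0) := by
    simpa using (tendsto_pow_atTop_nhds_zero_of_lt_one one_half_pos.le
      one_half_lt_one).const_mul (2 * C)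
  exact norm_le_zero_iff.1 (ge_of_tendsto' tendsto_zero fun k ↦ bound k B hB r hr)

end VanishesOnZeroProducts

end ZeroProducts

section LinearExtension

variable {X 𝕜 F : Type*} [TopologicalSpace X] [RCLike 𝕜] [AddCommGroup F] [Module 𝕜 F]

lemma exists_eq_realEmbedding_add_I_smul (f : X →ᵇ 𝕜) :
    ∃ p q : X →ᵇ ℝ, f = realEmbedding X 𝕜 p + (RCLike.I : 𝕜) • realEmbedding X 𝕜 q := by
  refine ⟨RCLike.reCLM.compLeftContinuousBounded X f,
    RCLike.imCLM.compLeftContinuousBounded X f, ?_⟩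
  ext x
  simpa [mul_comm] using (RCLike.re_add_im (f x)).symm

theorem linearMap_ext_of_eqOn_peak {T S : (X →ᵇ 𝕜) →ₗ[𝕜] F} (x₀ : X)
    (h : ∀ g ∈ Set.Icc (0 : X →ᵇ ℝ) 1, g x₀ = 1 →
      T (realEmbedding X 𝕜 g) = S (realEmbedding X 𝕜 g)) : T = S := by
  have one : T 1 = S 1 := by
    simpa only [realEmbedding_one] using h 1 ⟨fun _ ↦ zero_le_one, le_rfl⟩ rfl
  have of_nonneg (p : X →ᵇ ℝ) (hp : 0 ≤ p) (hpx : p x₀ = 0) :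
      T (realEmbedding X 𝕜 p) = S (realEmbedding X 𝕜 p) := by
    obtain ⟨C, hC, hpC⟩ : ∃ C > 0, ∀ x, p x ≤ C := ⟨‖p‖ + 1, by positivity, fun x ↦
      (le_abs_self _).trans ((p.norm_coe_le_norm x).trans (le_add_of_nonneg_right zero_le_one))⟩
    have mem : 1 - C⁻¹ • p ∈ Set.Icc (0 : X →ᵇ ℝ) 1 :=
      ⟨sub_nonneg.2 fun x ↦ (inv_mul_le_iff₀ hC).2 (by simpa using hpC x),
        sub_le_self _ fun x ↦ mul_nonneg (inv_nonneg.2 hC.le) (hp x)⟩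
    have peak := h _ mem (by simp [hpx])
    simp only [map_sub, realEmbedding_one, realEmbedding_smul] at peak
    simp only [map_smul, one, sub_right_inj] at peak
    exact smul_right_injective F (r := ((C⁻¹ : ℝ) : 𝕜)) (by simpa using hC.ne') peak
  have of_real (g : X →ᵇ ℝ) : T (realEmbedding X 𝕜 g) = S (realEmbedding X 𝕜 g) := by
    have hg : g = ((g - g x₀ • 1) ⊔ 0) - (-(g - g x₀ • 1) ⊔ 0) + g x₀ • 1 := by
      rw [← posPart_def, ← negPart_def, posPart_sub_negPart, sub_add_cancel]
    rw [hg]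
    simp only [map_add, map_sub, realEmbedding_smul, realEmbedding_one]
    rw [map_smul, map_smul, one, of_nonneg _ le_sup_right (by simp),
      of_nonneg _ le_sup_right (by simp)]
  ext f
  obtain ⟨p, q, rfl⟩ := exists_eq_realEmbedding_add_I_smul f
  simp only [map_add, map_smul, of_real]

end LinearExtension

lemma exists_norm_update_update_le {ι 𝕜 E F : Type*} [Finite ι] [DecidableEq ι]
    [NontriviallyNormedField 𝕜] [SeminormedAddCommGroup E] [NormedSpace 𝕜 E]
    [SeminormedAddCommGroup F] [NormedSpace 𝕜 F] (L : ContinuousMultilinearMap 𝕜 (fun _ : ι ↦ E) F)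
    (v : ι → E) {a b : ι} (hab : a ≠ b) :
    ∃ C, 0 ≤ C ∧
      ∀ x y, ‖L (Function.update (Function.update v a x) b y)‖ ≤ C * ‖x‖ * ‖y‖ := by
  cases nonempty_fintype ι
  refine ⟨‖L‖ * ∏ i ∈ (univ \ {b}) \ {a}, ‖v i‖, by positivity, fun x y ↦ ?_⟩
  refine (L.le_opNorm _).trans_eq ?_
  simp only [Function.apply_update (fun _ ↦ norm)]
  rw [prod_update_of_mem (mem_univ b), prod_update_of_mem (by simpa using hab)]
  ring

namespace IsOrthPolar

variable {ι X 𝕜 F : Type*} [TopologicalSpace X] [RCLike 𝕜] [NormedAddCommGroup F]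
  [NormedSpace 𝕜 F]
  {L : ContinuousMultilinearMap 𝕜 (fun _ : ι ↦ X →ᵇ 𝕜) F}

lemma map_update_realEmbedding_mul [Finite ι] [DecidableEq ι] (hL : IsOrthPolar L)
    (v : ι → X →ᵇ 𝕜) (a b : ι) {r : X →ᵇ ℝ} (hr : r ∈ Set.Icc 0 1) :
    L (Function.update v a (realEmbedding X 𝕜 r * v a)) =
      L (Function.update v b (realEmbedding X 𝕜 r * v b)) := by
  obtain rfl | hab := eq_or_ne a b
  · rfl
  let : NormedSpace ℝ F := .restrictScalars ℝ 𝕜 F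
  have real_smul (c : ℝ) (z : F) : c • z = (c : 𝕜) • z := rfl
  let arg (f g : X →ᵇ ℝ) : ι → X →ᵇ 𝕜 :=
    Function.update (Function.update v a (realEmbedding X 𝕜 f * v a)) b (realEmbedding X 𝕜 g * v b)
  have arg_comm (f g) : arg f g = Function.update (Function.update v b (realEmbedding X 𝕜 g * v b))
    a (realEmbedding X 𝕜 f * v a) := Function.update_comm hab _ _ _
  let B : (X →ᵇ ℝ) →ₗ[ℝ] (X →ᵇ ℝ) →ₗ[ℝ] F := .mk₂ ℝ (fun f g ↦ L (arg f g))
    (fun f f' g ↦ by simp only [arg_comm, map_add, add_mul, L.map_update_add])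
    (fun c f g ↦ by
      simp only [arg_comm, realEmbedding_smul, smul_mul_assoc, L.map_update_smul, real_smul])
    (fun f g g' ↦ by simp only [arg, map_add, add_mul, L.map_update_add])
    (fun c f g ↦ by
      simp only [arg, realEmbedding_smul, smul_mul_assoc, L.map_update_smul, real_smul])
  obtain ⟨C, hC, hbound⟩ := exists_norm_update_update_le L v hab
  have norm_weighted_le (f : X →ᵇ ℝ) (i : ι) : ‖realEmbedding X 𝕜 f * v i‖ ≤ ‖f‖ * ‖v i‖ :=
    (norm_mul_le _ _).trans (mul_le_mul_of_nonneg_right (norm_realEmbedding_le f) (norm_nonneg _))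
  have hB : VanishesOnZeroProducts B (C * ‖v a‖ * ‖v b‖) := by
    refine ⟨fun f g ↦ ?_, fun f g hfg ↦ hL.eq_zero_of_mul_eq_zero hab ?_⟩
    · calc ‖L (arg f g)‖ ≤ C * (‖f‖ * ‖v a‖) * (‖g‖ * ‖v b‖) := (hbound _ _).trans <| by
            gcongr <;> apply norm_weighted_le
        _ = C * ‖v a‖ * ‖v b‖ * ‖f‖ * ‖g‖ := by ring
    · simp only [arg, Function.update_self, Function.update_of_ne hab]
      rw [mul_mul_mul_comm, ← realEmbedding_mul, hfg, map_zero, zero_mul]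
  have arg_left : arg r 1 = Function.update v a (realEmbedding X 𝕜 r * v a) := by
    simp [arg_comm, realEmbedding_one]
  have arg_right : arg 1 r = Function.update v b (realEmbedding X 𝕜 r * v b) := by
    simp [arg, realEmbedding_one]
  rw [← arg_left, ← arg_right]
  exact sub_eq_zero.1 (hB.transferDefect_eq_zero (by positivity) hr)

theorem map_update_mul [Finite ι] [DecidableEq ι] (hL : IsOrthPolar L) (v : ι → X →ᵇ 𝕜) (a b : ι)
    (r : X →ᵇ 𝕜) :
    L (Function.update v a (r * v a)) = L (Function.update v b (r * v b)) := by
  let T (i : ι) : (X →ᵇ 𝕜) →ₗ[𝕜] F := L.toLinearMap v i ∘ₗ LinearMap.mulRight 𝕜 (v i)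
  suffices T a = T b from LinearMap.congr_fun this r
  obtain _ | ⟨⟨x⟩⟩ := isEmpty_or_nonempty X
  · ext r
    rw [show r = 0 from BoundedContinuousFunction.ext isEmptyElim, map_zero, map_zero]
  · exact linearMap_ext_of_eqOn_peak x fun g hg _ ↦ hL.map_update_realEmbedding_mul v a b hg

/-- The representation theorem for orthogonally additive polynomials, in polarized form. -/
theorem exists_eq_map_prod [Fintype ι] [Nonempty ι] (hL : IsOrthPolar L) :
    ∃ T : (X →ᵇ 𝕜) →L[𝕜] F, ∀ v, L v = T (∏ i, v i) := by
  classical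
  let k := Classical.arbitrary ι
  refine ⟨L.toContinuousLinearMap 1 k, fun v ↦ ?_⟩
  let arg (S : Finset ι) : ι → X →ᵇ 𝕜 :=
    Function.update (S.piecewise (1 : ι → X →ᵇ 𝕜) v) k ((∏ i ∈ S, v i) * v k)
  have collect (S : Finset ι) (hk : k ∉ S) : L v = L (arg S) := by
    induction S using Finset.induction_on with
    | empty => simp [arg]
    | insert j S hj ih =>
      obtain ⟨hkj, hkS⟩ := not_or.1 (mem_insert.not.1 hk)
      let w := Function.update (arg S) j 1
      have w_j : w j = 1 := Function.update_self ..
      have w_k : w k = (∏ i ∈ S, v i) * v k := by simp [w, arg, hkj]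
      have hS : arg S = Function.update w j (v j * w j) := by
        rw [w_j, mul_one, Function.update_idem, eq_comm, Function.update_eq_self_iff]
        simp [arg, hj, Ne.symm hkj]
      have hjS : arg (insert j S) = Function.update w k (v j * w k) := by
        simp only [w_k, w, arg]
        rw [piecewise_insert, prod_insert hj, mul_assoc, Function.update_comm hkj,
          Function.update_idem, Pi.one_apply]
      rw [ih hkS, hS, hjS, hL.map_update_mul w j k (v j)]
  have arg_erase : arg (univ.erase k) = Function.update (1 : ι → X →ᵇ 𝕜) k (∏ i, v i) := by
    rw [← prod_erase_mul univ v (mem_univ k)]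
    ext1 i
    obtain rfl | hik := eq_or_ne i k <;> simp [arg, *]
  exact (collect _ (notMem_erase k univ)).trans (congrArg L arg_erase)

end IsOrthPolar

section ZeroAtInfty

variable {X E : Type*} [TopologicalSpace X] [SeminormedAddCommGroup E]

lemma norm_zeroAtInfty_apply_le (f : C₀(X, E)) (x : X) : ‖f x‖ ≤ ‖f‖ := f.toBCF.norm_coe_le_norm x

lemma norm_zeroAtInfty_le {f : C₀(X, E)} {C : ℝ} (hC : 0 ≤ C) (h : ∀ x, ‖f x‖ ≤ C) : ‖f‖ ≤ C :=
  (f.toBCF.norm_le hC).2 h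

lemma continuous_eval_zeroAtInfty (x : X) : Continuous fun f : C₀(X, E) ↦ f x :=
  (continuous_eval_const (F := X →ᵇ E) x).comp
    ZeroAtInftyContinuousMap.isometry_toBCF.continuous

lemma isCompact_setOf_le_norm_zeroAtInfty (f : C₀(X, E)) {c : ℝ} (hc : 0 < c) :
    IsCompact {x | c ≤ ‖f x‖} := by
  obtain ⟨K, hK, hKf⟩ := Filter.mem_cocompact.1 <|
    f.zero_at_infty'.norm.eventually_lt_const (v := ‖(0 : E)‖) (by simpa using hc)
  exact hK.of_isClosed_subset (isClosed_le continuous_const f.continuous.norm)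
    fun x (hx : c ≤ ‖f x‖) ↦ by_contra fun hxK ↦ hx.not_gt (hKf hxK)

lemma exists_norm_apply_eq_norm_zeroAtInfty {f : C₀(X, E)} (hf : ‖f‖ ≠ 0) : ∃ x, ‖f x‖ = ‖f‖ := by
  obtain ⟨x₀, hx₀⟩ : ∃ x₀, 0 < ‖f x₀‖ := by
    by_contra! h
    exact hf ((norm_zeroAtInfty_le le_rfl h).antisymm (norm_nonneg f))
  have vanish : ∀ᶠ x in Filter.cocompact X, ‖f x‖ < ‖f x₀‖ :=
    f.zero_at_infty'.norm.eventually_lt_const (by simpa using hx₀)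
  obtain ⟨x, hx⟩ := f.continuous.norm.exists_forall_ge' x₀ (vanish.mono fun _ ↦ le_of_lt)
  exact ⟨x, (norm_zeroAtInfty_apply_le f x).antisymm (norm_zeroAtInfty_le (norm_nonneg _) hx)⟩

end ZeroAtInfty

section MulC0

variable {X 𝕜 : Type*} [TopologicalSpace X] [NontriviallyNormedField 𝕜]

/-- Multiplication of bounded continuous functions by a fixed function `w` vanishing at infinity. -/
noncomputable def mulC0 (w : C₀(X, 𝕜)) : (X →ᵇ 𝕜) →L[𝕜] C₀(X, 𝕜) :=
  LinearMap.mkContinuous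
    { toFun := fun u ↦ ⟨⟨fun x ↦ u x * w x, by fun_prop⟩,
        (w.zero_at_infty'.zero_mul_isBoundedUnder_le
          (Filter.isBoundedUnder_of ⟨‖u‖, fun x ↦ u.norm_coe_le_norm x⟩)).congr
            fun x ↦ mul_comm _ _⟩
      map_add' := fun u v ↦ ZeroAtInftyContinuousMap.ext fun x ↦ add_mul (u x) (v x) (w x)
      map_smul' := fun c u ↦ ZeroAtInftyContinuousMap.ext fun x ↦ mul_assoc c (u x) (w x) }
    ‖w‖ fun u ↦ norm_zeroAtInfty_le (by positivity) fun x ↦ by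
      calc ‖u x * w x‖ = ‖w x‖ * ‖u x‖ := by rw [norm_mul, mul_comm]
        _ ≤ ‖w‖ * ‖u‖ := by
          gcongr
          exacts [norm_zeroAtInfty_apply_le w x, u.norm_coe_le_norm x]

@[simp]
lemma mulC0_apply (w : C₀(X, 𝕜)) (u : X →ᵇ 𝕜) (x : X) : mulC0 w u x = u x * w x := rfl

lemma mulC0_eq_of_eqOn_tsupport {w f : C₀(X, 𝕜)} {u : X →ᵇ 𝕜} (hfu : ∀ x, f x = u x)
    (hw : ∀ x ∈ tsupport f, w x = 1) : mulC0 w u = f := by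
  ext x
  rw [mulC0_apply, ← hfu]
  by_cases hx : x ∈ tsupport f
  · rw [hw x hx, mul_one]
  · rw [image_eq_zero_of_notMem_tsupport hx, zero_mul]

/-- The local form of the representation `P u = T (uⁿ)` of orthogonally additive polynomials: after
multiplication by a fixed function `w` vanishing at infinity, `P` is linear in the `n`-th power. -/
def FactorsThroughPow {F : Type*} [AddCommGroup F] [Module 𝕜 F] (n : ℕ) (P : C₀(X, 𝕜) → F) : Prop :=
  ∀ w, ∃ T : (X →ᵇ 𝕜) →ₗ[𝕜] F, ∀ u, P (mulC0 w u) = T (u ^ n)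

end MulC0

theorem IsOrthPolar.factorsThroughPow {ι X 𝕜 F : Type*} [Fintype ι] [Nonempty ι]
    [TopologicalSpace X] [RCLike 𝕜] [NormedAddCommGroup F] [NormedSpace 𝕜 F]
    {L : ContinuousMultilinearMap 𝕜 (fun _ : ι ↦ C₀(X, 𝕜)) F} (hL : IsOrthPolar L) :
    FactorsThroughPow (Fintype.card ι) fun f ↦ L fun _ ↦ f := by
  classical
  intro w
  have pullback : IsOrthPolar (L.compContinuousLinearMap fun _ ↦ mulC0 w) := by
    refine ⟨fun v σ ↦ hL.perm (fun i ↦ mulC0 w (v i)) σ, fun f g hfg ↦ ?_⟩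
    simp only [ContinuousMultilinearMap.compContinuousLinearMap_apply, map_add]
    refine hL.diagonal _ _ (ZeroAtInftyContinuousMap.ext fun x ↦ ?_)
    have hx : f x * g x = 0 := DFunLike.congr_fun hfg x
    simp [mul_mul_mul_comm, hx]
  obtain ⟨T, hT⟩ := pullback.exists_eq_map_prod
  exact ⟨T, fun u ↦ by simpa using hT fun _ ↦ u⟩

section PeakFunctions

variable {X 𝕜 : Type*} [TopologicalSpace X] [RCLike 𝕜] {x : X} {f f₁ f₂ w : C₀(X, 𝕜)} {n : ℕ}

/-- The compactly supported functions with values in `[0, 1]` that take the value `1` at `x`. -/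
def IsPeakAt (x : X) (f : C₀(X, 𝕜)) : Prop :=
  HasCompactSupport f ∧
    ∃ g ∈ Set.Icc (0 : X →ᵇ ℝ) 1, g x = 1 ∧ ∀ z, f z = realEmbedding X 𝕜 g z

lemma exists_pow_eq_of_mem_Icc (hn : n ≠ 0) {g : X →ᵇ ℝ} (hg : g ∈ Set.Icc 0 1) :
    ∃ u ∈ Set.Icc (0 : X →ᵇ ℝ) 1, u ^ n = g := by
  let root : C(X, ℝ) := ⟨fun z ↦ g z ^ (n⁻¹ : ℝ), g.continuous.rpow_const (by simp)⟩
  refine ⟨clampUnit root, clampUnit_mem_Icc root, ?_⟩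
  ext z
  have nonneg : 0 ≤ root z := Real.rpow_nonneg (hg.1 z) _
  have le_one : root z ≤ 1 := Real.rpow_le_one (hg.1 z) (hg.2 z) (by positivity)
  rw [BoundedContinuousFunction.pow_apply, clampUnit_apply, min_eq_right le_one,
    max_eq_right nonneg]
  exact Real.rpow_inv_natCast_pow (hg.1 z) hn

lemma apply_eq_one_of_pow_apply_eq_one (hn : n ≠ 0) {u : X →ᵇ ℝ} (hu : u ∈ Set.Icc 0 1)
    (h : (u ^ n) x = 1) : u x = 1 :=
  (pow_eq_one_iff_of_nonneg (hu.1 x) hn).1 h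

lemma exists_isPeakAt_eqOn_one [RegularSpace X] [LocallyCompactSpace X] (x : X) {K : Set X}
    (hK : IsCompact K) : ∃ f : C₀(X, 𝕜), IsPeakAt x f ∧ ∀ z ∈ K, f z = 1 := by
  obtain ⟨g, hgK, -, hg, hg_mem⟩ :=
    exists_continuous_one_zero_of_isCompact (hK.insert x) isClosed_empty (Set.disjoint_empty _)
  have g_eq (z : X) : clampUnit g z = g z := by
    rw [clampUnit_apply, min_eq_right (hg_mem z).2, max_eq_right (hg_mem z).1]
  have compact_support : HasCompactSupport (realEmbedding X 𝕜 (clampUnit g)) :=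
    hg.mono' fun z hz ↦ subset_tsupport _ fun h0 ↦ hz (by simp [g_eq, h0])
  refine ⟨⟨(realEmbedding X 𝕜 (clampUnit g)).toContinuousMap, compact_support.is_zero_at_infty⟩,
    ⟨compact_support, _, clampUnit_mem_Icc g, ?_, fun _ ↦ rfl⟩, fun z hz ↦ ?_⟩
  · exact (g_eq x).trans (hgK (Set.mem_insert x K))
  · exact (congrArg _ ((g_eq z).trans (hgK (Set.mem_insert_of_mem x hz)))).trans RCLike.ofReal_one

namespace IsPeakAt

lemma apply_eq_one (hf : IsPeakAt x f) : f x = 1 := by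
  obtain ⟨-, g, -, hgx, hfg⟩ := hf
  simp [hfg, hgx]

lemma nonneg (hf : IsPeakAt x f) (z : X) : 0 ≤ f z := by
  obtain ⟨-, g, hg, -, hfg⟩ := hf
  simpa [hfg] using hg.1 z

lemma norm_apply_le_one (hf : IsPeakAt x f) (z : X) : ‖f z‖ ≤ 1 := by
  obtain ⟨-, g, hg, -, hfg⟩ := hf
  exact hfg z ▸ norm_realEmbedding_apply_le_one hg z

lemma norm_eq_one (hf : IsPeakAt x f) : ‖f‖ = 1 :=
  (norm_zeroAtInfty_le zero_le_one hf.norm_apply_le_one).antisymm <| by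
    simpa [hf.apply_eq_one] using norm_zeroAtInfty_apply_le f x

lemma mulC0_realEmbedding (hw : IsPeakAt x w) {u : X →ᵇ ℝ} (hu : u ∈ Set.Icc 0 1) (hux : u x = 1) :
    IsPeakAt x (mulC0 w (realEmbedding X 𝕜 u)) := by
  obtain ⟨hw, g, hg, hgx, hwg⟩ := hw
  refine ⟨hw.mul_left, u * g, ⟨fun z ↦ mul_nonneg (hu.1 z) (hg.1 z), fun z ↦
    mul_le_one₀ (hu.2 z) (hg.1 z) (hg.2 z)⟩, by simp [hux, hgx], fun z ↦ by simp [hwg]⟩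

/-- The witness is the `n`-th root of the average of `f₁ ^ n` and `f₂ ^ n`. -/
lemma exists_two_smul_map_eq [RegularSpace X] [LocallyCompactSpace X] {F : Type*} [AddCommGroup F]
    [Module 𝕜 F] {P : C₀(X, 𝕜) → F} (hP : FactorsThroughPow n P) (hn : n ≠ 0)
    (hf₁ : IsPeakAt x f₁) (hf₂ : IsPeakAt x f₂) :
    ∃ f, IsPeakAt x f ∧ (2 : 𝕜) • P f = P f₁ + P f₂ := by
  obtain ⟨hc₁, g₁, hg₁, hgx₁, hfg₁⟩ := hf₁
  obtain ⟨hc₂, g₂, hg₂, hgx₂, hfg₂⟩ := hf₂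
  obtain ⟨w, hw, hw_one⟩ := exists_isPeakAt_eqOn_one (𝕜 := 𝕜) x (hc₁.isCompact.union hc₂.isCompact)
  have mem : (2⁻¹ : ℝ) • (g₁ ^ n + g₂ ^ n) ∈ Set.Icc (0 : X →ᵇ ℝ) 1 := by
    refine ⟨fun z ↦ ?_, fun z ↦ ?_⟩
    · have := add_nonneg (pow_nonneg (hg₁.1 z) n) (pow_nonneg (hg₂.1 z) n)
      exact mul_nonneg (by positivity) this
    · have := add_le_add (pow_le_one₀ (n := n) (hg₁.1 z) (hg₁.2 z))
        (pow_le_one₀ (n := n) (hg₂.1 z) (hg₂.2 z))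
      exact (inv_mul_le_iff₀ two_pos).2 (this.trans_eq (by norm_num))
  obtain ⟨u, hu, hun⟩ := exists_pow_eq_of_mem_Icc hn mem
  have hux : u x = 1 := apply_eq_one_of_pow_apply_eq_one hn hu (by norm_num [hun, hgx₁, hgx₂])
  obtain ⟨T, hT⟩ := hP w
  refine ⟨_, hw.mulC0_realEmbedding hu hux, ?_⟩
  have pow_eq : (2 : 𝕜) • realEmbedding X 𝕜 u ^ n =
      realEmbedding X 𝕜 g₁ ^ n + realEmbedding X 𝕜 g₂ ^ n := by
    ext z
    have hz : u z ^ n = 2⁻¹ * (g₁ z ^ n + g₂ z ^ n) := DFunLike.congr_fun hun z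
    change (2 : 𝕜) * (u z : 𝕜) ^ n = (g₁ z : 𝕜) ^ n + (g₂ z : 𝕜) ^ n
    rw [← RCLike.ofReal_pow, hz]
    push_cast
    ring
  rw [← mulC0_eq_of_eqOn_tsupport hfg₁ fun z hz ↦ hw_one z (.inl hz),
    ← mulC0_eq_of_eqOn_tsupport hfg₂ fun z hz ↦ hw_one z (.inr hz),
    hT, hT, hT, ← map_smul, pow_eq, map_add]

end IsPeakAt

lemma mem_closure_mulC0_isPeakAt [RegularSpace X] [LocallyCompactSpace X] (x : X) (f : C₀(X, 𝕜)) :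
    f ∈ closure ((fun w ↦ mulC0 w f.toBCF) '' {w | IsPeakAt x w}) := by
  refine Metric.mem_closure_iff.2 fun ε hε ↦ ?_
  have hε2 := half_pos hε
  obtain ⟨w, hw, hw_one⟩ := exists_isPeakAt_eqOn_one (𝕜 := 𝕜) x
    (isCompact_setOf_le_norm_zeroAtInfty f (half_pos hε2))
  refine ⟨_, Set.mem_image_of_mem _ hw, ?_⟩
  rw [dist_eq_norm]
  refine (norm_zeroAtInfty_le hε2.le fun z ↦ ?_).trans_lt (half_lt_self hε)
  change ‖f z - f z * w z‖ ≤ ε / 2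
  obtain hz | hz := le_or_gt (ε / 2 / 2) ‖f z‖
  · simp [hw_one z hz, hε2.le]
  · calc ‖f z - f z * w z‖ ≤ ‖f z‖ + ‖f z‖ * ‖w z‖ := (norm_sub_le _ _).trans_eq (by rw [norm_mul])
      _ ≤ ‖f z‖ + ‖f z‖ * 1 := by gcongr; exact hw.norm_apply_le_one z
      _ ≤ ε / 2 := by linarith

end PeakFunctions

lemma eq_of_two_le_norm_add {𝕜 E : Type*} [RCLike 𝕜] [NormedAddCommGroup E] [InnerProductSpace 𝕜 E]
    {a b : E} (ha : ‖a‖ ≤ 1) (hb : ‖b‖ ≤ 1) (hab : 2 ≤ ‖a + b‖) : a = b := by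
  have parallelogram := parallelogram_law_with_norm 𝕜 a b
  have : ‖a - b‖ ^ 2 ≤ 0 := by nlinarith [norm_nonneg a, norm_nonneg b]
  simpa [sub_eq_zero] using this

section PointRepresentation

variable {X Y 𝕜 : Type*} [TopologicalSpace X] [TopologicalSpace Y] [RCLike 𝕜] {n : ℕ}
  {P : C₀(X, 𝕜) → C₀(Y, 𝕜)}

lemma IsPeakAt.norm_map_eq_one {x : X} {f : C₀(X, 𝕜)} (hf : IsPeakAt x f)
    (hiso : ∀ f : C₀(X, 𝕜), (∀ x, 0 ≤ f x) → ‖P f‖ = ‖f‖ ^ n) : ‖P f‖ = 1 := by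
  rw [hiso f hf.nonneg, hf.norm_eq_one, one_pow]

/-- Where the average of `P f₁` and `P f₂` has norm `1`, the two agree by strict convexity. The sets
`{‖P f‖ ≥ 1}` are therefore directed, and compactness yields a common point. -/
theorem exists_norm_eq_one_forall_isPeakAt [RegularSpace X] [LocallyCompactSpace X]
    (hP : FactorsThroughPow n P) (hn : n ≠ 0)
    (hiso : ∀ f : C₀(X, 𝕜), (∀ x, 0 ≤ f x) → ‖P f‖ = ‖f‖ ^ n) (x : X) :
    ∃ (y : Y) (c : 𝕜), ‖c‖ = 1 ∧ ∀ f, IsPeakAt x f → P f y = c := by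
  have apply_le (f) (hf : IsPeakAt x f) (y : Y) : ‖P f y‖ ≤ 1 :=
    (norm_zeroAtInfty_apply_le (P f) y).trans_eq (hf.norm_map_eq_one hiso)
  let peakSet (f : {f : C₀(X, 𝕜) // IsPeakAt x f}) : Set Y := {y | 1 ≤ ‖P f y‖}
  have merge (f₁ f₂ : {f : C₀(X, 𝕜) // IsPeakAt x f}) :
      ∃ f, ∀ y ∈ peakSet f, P f₁ y = P f₂ y ∧ 1 ≤ ‖P f₁ y‖ := by
    obtain ⟨f, hf, hPf⟩ := f₁.2.exists_two_smul_map_eq hP hn f₂.2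
    refine ⟨⟨f, hf⟩, fun y (hy : 1 ≤ ‖P f y‖) ↦ ?_⟩
    have two_le : 2 ≤ ‖P f₁ y + P f₂ y‖ := by
      have : (2 : 𝕜) * P f y = P f₁ y + P f₂ y := DFunLike.congr_fun hPf y
      rw [← this, norm_mul, RCLike.norm_ofNat]
      linarith
    have eq := eq_of_two_le_norm_add (𝕜 := 𝕜) (apply_le f₁ f₁.2 y) (apply_le f₂ f₂.2 y) two_le
    rw [← eq] at two_le
    exact ⟨eq, by linarith [norm_add_le (P f₁ y) (P f₁ y)]⟩
  have directed : Directed (· ⊇ ·) peakSet := fun f₁ f₂ ↦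
    let ⟨f, hf⟩ := merge f₁ f₂
    ⟨f, fun y hy ↦ (hf y hy).2, fun y hy ↦ (hf y hy).2.trans_eq (congrArg norm (hf y hy).1)⟩
  obtain ⟨f₀, hf₀, -⟩ := exists_isPeakAt_eqOn_one (𝕜 := 𝕜) x isCompact_empty
  have : Nonempty {f : C₀(X, 𝕜) // IsPeakAt x f} := ⟨⟨f₀, hf₀⟩⟩
  obtain ⟨y, hy⟩ := IsCompact.nonempty_iInter_of_directed_nonempty_isCompact_isClosed peakSet
    directed
    (fun f ↦ by
      have hf := f.2.norm_map_eq_one hiso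
      obtain ⟨y, hy⟩ := exists_norm_apply_eq_norm_zeroAtInfty (f := P f) (by simp [hf])
      exact ⟨y, (hy.trans hf).ge⟩)
    (fun f ↦ isCompact_setOf_le_norm_zeroAtInfty (P f) one_pos)
    (fun f ↦ isClosed_le continuous_const (P f).continuous.norm)
  refine ⟨y, P f₀ y, (apply_le f₀ hf₀ y).antisymm (Set.mem_iInter.1 hy ⟨f₀, hf₀⟩), fun f hf ↦ ?_⟩
  obtain ⟨g, hg⟩ := merge ⟨f, hf⟩ ⟨f₀, hf₀⟩
  exact (hg y (Set.mem_iInter.1 hy g)).1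

theorem map_apply_eq_mul_pow [RegularSpace X] [LocallyCompactSpace X] (hPc : Continuous P)
    (hP : FactorsThroughPow n P) (hn : n ≠ 0) {x : X} {y : Y} {c : 𝕜}
    (hpeak : ∀ f, IsPeakAt x f → P f y = c) (f : C₀(X, 𝕜)) : P f y = c * f x ^ n := by
  let evalY : C₀(Y, 𝕜) →ₗ[𝕜] 𝕜 := ⟨⟨fun g ↦ g y, fun _ _ ↦ rfl⟩, fun _ _ ↦ rfl⟩
  let evalX : (X →ᵇ 𝕜) →ₗ[𝕜] 𝕜 := c • (BoundedContinuousFunction.evalCLM 𝕜 x).toLinearMap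
  have of_mulC0 (w : C₀(X, 𝕜)) (hw : IsPeakAt x w) : P (mulC0 w f.toBCF) y = c * f x ^ n := by
    obtain ⟨T, hT⟩ := hP w
    suffices evalY ∘ₗ T = evalX by
      rw [hT]
      exact LinearMap.congr_fun this (f.toBCF ^ n)
    refine linearMap_ext_of_eqOn_peak x fun g hg hgx ↦ ?_
    obtain ⟨u, hu, rfl⟩ := exists_pow_eq_of_mem_Icc hn hg
    have hux := apply_eq_one_of_pow_apply_eq_one hn hu hgx
    calc T (realEmbedding X 𝕜 (u ^ n)) y = P (mulC0 w (realEmbedding X 𝕜 u)) y := by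
          rw [hT, realEmbedding_pow]
      _ = c := hpeak _ (hw.mulC0_realEmbedding hu hux)
      _ = evalX (realEmbedding X 𝕜 (u ^ n)) := by simp [evalX, hux]
  have closed : IsClosed {g : C₀(X, 𝕜) | P g y = c * f x ^ n} :=
    isClosed_eq ((continuous_eval_zeroAtInfty y).comp hPc) continuous_const
  exact closed.closure_subset_iff.2 (Set.image_subset_iff.2 of_mulC0)
    (mem_closure_mulC0_isPeakAt x f)

end PointRepresentation

section RegularRange

variable {X Y 𝕜 : Type*} [TopologicalSpace X] [TopologicalSpace Y] [RCLike 𝕜] {n : ℕ}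
  {P : C₀(X, 𝕜) → C₀(Y, 𝕜)} {ψ : X → Y}

/-- Every point can be separated from every closed set not containing it by a function in the range
of `P`. -/
def HasRegularRange (P : C₀(X, 𝕜) → C₀(Y, 𝕜)) : Prop :=
  ∀ Y₀ : Set Y, IsClosed Y₀ → ∀ y ∉ Y₀, ∃ f, (∀ z ∈ Y₀, P f z = 0) ∧ P f y ≠ 0

lemma exists_apply_eq_one_eqOn_zero [RegularSpace X] [LocallyCompactSpace X] {x : X} {A : Set X}
    (hA : IsClosed A) (hx : x ∉ A) : ∃ f : C₀(X, 𝕜), f x = 1 ∧ ∀ z ∈ A, f z = 0 := by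
  obtain ⟨g, hgA, hgx, -⟩ := exists_continuous_zero_one_of_isCompact' isCompact_singleton hA
    (Set.disjoint_singleton_left.2 hx)
  obtain ⟨w, hw, -⟩ := exists_isPeakAt_eqOn_one (𝕜 := 𝕜) x isCompact_empty
  refine ⟨mulC0 w (realEmbedding X 𝕜 (clampUnit g)), ?_, fun z hz ↦ ?_⟩
  · rw [mulC0_apply, realEmbedding_apply, clampUnit_of_one_le (hgx rfl).ge, hw.apply_eq_one]
    simp
  · rw [mulC0_apply, realEmbedding_apply, clampUnit_of_nonpos (hgA hz).le]
    simp

lemma injective_of_map_apply_eq_zero_iff [T2Space X] [LocallyCompactSpace X]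
    (hψ : ∀ f x, P f (ψ x) = 0 ↔ f x = 0) : ψ.Injective := by
  intro x x' hxx'
  by_contra hne
  obtain ⟨f, hfx, hfx'⟩ := exists_apply_eq_one_eqOn_zero (𝕜 := 𝕜) (isClosed_singleton (x := x')) hne
  have hf : f x = 0 := by rw [← hψ, hxx', hψ, hfx' x' rfl]
  exact one_ne_zero (hfx.symm.trans hf)

lemma isOpenMap_of_map_apply_eq_zero_iff [RegularSpace X] [LocallyCompactSpace X]
    (hψ_surj : ψ.Surjective) (hψ : ∀ f x, P f (ψ x) = 0 ↔ f x = 0) : IsOpenMap ψ := by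
  refine isOpenMap_iff_nhds_le.2 fun x U hU ↦ ?_
  obtain ⟨V, hVU, hV, hxV⟩ := mem_nhds_iff.1 (Filter.mem_map.1 hU)
  obtain ⟨f, hfx, hf⟩ := exists_apply_eq_one_eqOn_zero (𝕜 := 𝕜) hV.isClosed_compl (not_not.2 hxV)
  have hPf : P f (ψ x) ≠ 0 := by simp [hψ, hfx]
  filter_upwards [(P f).continuous.continuousAt.eventually_ne hPf] with y hy
  obtain ⟨z, rfl⟩ := hψ_surj y
  exact hVU (not_not.1 fun hz ↦ hy ((hψ f z).2 (hf z hz)))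

namespace HasRegularRange

lemma continuous_of_map_apply_eq_zero_iff (hP : HasRegularRange P)
    (hψ : ∀ f x, P f (ψ x) = 0 ↔ f x = 0) : Continuous ψ := by
  refine continuous_iff_continuousAt.2 fun x U hU ↦ ?_
  obtain ⟨V, hVU, hV, hxV⟩ := mem_nhds_iff.1 hU
  obtain ⟨f, hf, hfx⟩ := hP Vᶜ hV.isClosed_compl (ψ x) (not_not.2 hxV)
  rw [Filter.mem_map]
  filter_upwards [f.continuous.continuousAt.eventually_ne ((hψ f x).not.1 hfx)] with z hz
  exact hVU (not_not.1 fun hzV ↦ hz ((hψ f z).1 (hf _ hzV)))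

lemma surjective_of_norm_map_apply [T2Space Y] (hP : HasRegularRange P) (hP0 : P 0 = 0) (hn : n ≠ 0)
    (hψ_cont : Continuous ψ) (hψ : ∀ f x, ‖P f (ψ x)‖ = ‖f x‖ ^ n) : ψ.Surjective := by
  intro y
  by_contra hy
  obtain ⟨f, -, hf⟩ := hP ∅ isClosed_empty y (Set.notMem_empty y)
  obtain ⟨d, hd, hdf⟩ : ∃ d > 0, d ^ n < ‖P f y‖ := by
    have hpos : 0 < ‖P f y‖ := norm_pos_iff.2 hf
    refine ⟨min 1 (‖P f y‖ / 2), lt_min one_pos (half_pos hpos), ?_⟩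
    calc min 1 (‖P f y‖ / 2) ^ n ≤ min 1 (‖P f y‖ / 2) :=
          pow_le_of_le_one (by positivity) (min_le_left _ _) hn
      _ < ‖P f y‖ := (min_le_right _ _).trans_lt (half_lt_self hpos)
  let K := {x | d ≤ ‖f x‖}
  have hK : IsClosed (ψ '' K) :=
    ((isCompact_setOf_le_norm_zeroAtInfty f hd).image hψ_cont).isClosed
  obtain ⟨g, hg, hgy⟩ := hP (ψ '' K ∪ {z | ‖P f z‖ ≤ d ^ n})
    (hK.union (isClosed_le (P f).continuous.norm continuous_const)) y
    (not_or.2 ⟨fun ⟨x, _, hx⟩ ↦ hy ⟨x, hx⟩, hdf.not_ge⟩)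
  have hg0 : g = 0 := by
    ext x
    have mem : ψ x ∈ ψ '' K ∪ {z | ‖P f z‖ ≤ d ^ n} := by
      obtain hx | hx := le_total d ‖f x‖
      · exact .inl ⟨x, hx, rfl⟩
      · exact .inr ((hψ f x).trans_le (pow_le_pow_left₀ (norm_nonneg _) hx n))
    have := hψ g x
    rw [hg _ mem, norm_zero, eq_comm, pow_eq_zero_iff hn] at this
    exact norm_eq_zero.1 this
  exact hgy (by rw [hg0, hP0, ZeroAtInftyContinuousMap.zero_apply])

theorem exists_homeomorph [T2Space X] [LocallyCompactSpace X] [T2Space Y] (hP : HasRegularRange P)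
    (hP0 : P 0 = 0) (hn : n ≠ 0) (hψ : ∀ f x, ‖P f (ψ x)‖ = ‖f x‖ ^ n) :
    ∃ Ψ : X ≃ₜ Y, ⇑Ψ = ψ := by
  have zero_iff (f x) : P f (ψ x) = 0 ↔ f x = 0 := by
    rw [← norm_eq_zero, hψ, pow_eq_zero_iff hn, norm_eq_zero]
  have hcont := hP.continuous_of_map_apply_eq_zero_iff zero_iff
  have hsurj := hP.surjective_of_norm_map_apply hP0 hn hcont hψ
  have hbij : ψ.Bijective := ⟨injective_of_map_apply_eq_zero_iff zero_iff, hsurj⟩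
  exact ⟨(Equiv.ofBijective ψ hbij).toHomeomorphOfContinuousOpen hcont
    (isOpenMap_of_map_apply_eq_zero_iff hsurj zero_iff), rfl⟩

lemma continuous_of_map_apply_eq_mul_pow (hP : HasRegularRange P) {φ : Y → X}
    (hφ : Continuous φ) {h : Y → 𝕜} (hPh : ∀ f y, P f y = h y * f (φ y) ^ n) : Continuous h := by
  refine continuous_iff_continuousAt.2 fun y ↦ ?_
  obtain ⟨f, -, hf⟩ := hP ∅ isClosed_empty y (Set.notMem_empty y)
  have hfφ : Continuous fun z ↦ f (φ z) ^ n := by fun_prop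
  have ne_zero : f (φ y) ^ n ≠ 0 := right_ne_zero_of_mul (hPh f y ▸ hf)
  refine ((P f).continuous.continuousAt.div hfφ.continuousAt ne_zero).congr ?_
  filter_upwards [hfφ.continuousAt.eventually_ne ne_zero] with z hz
  exact (eq_div_iff hz).2 (hPh f z).symm |>.symm

end HasRegularRange

end RegularRange

theorem stmt_18_general {X Y 𝕜 : Type*} [TopologicalSpace X] [LocallyCompactSpace X] [T2Space X]
    [TopologicalSpace Y] [T2Space Y] [RCLike 𝕜] {n : ℕ} (hn : 0 < n) {P : C₀(X, 𝕜) → C₀(Y, 𝕜)}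
    (L : ContinuousMultilinearMap 𝕜 (fun _ : Fin n ↦ C₀(X, 𝕜)) C₀(Y, 𝕜))
    (hsymm : ∀ (v : Fin n → C₀(X, 𝕜)) (σ : Equiv.Perm (Fin n)), (L fun i ↦ v (σ i)) = L v)
    (hPL : ∀ f, P f = L fun _ ↦ f) (horth : IsOrthAdditive P)
    (hiso : ∀ f : C₀(X, 𝕜), (∀ x, 0 ≤ f x) → ‖P f‖ = ‖f‖ ^ n) (hreg : HasRegularRange P) :
    ∃ (h : Y → 𝕜) (φ : Y ≃ₜ X),
      Continuous h ∧ (∀ y, ‖h y‖ = 1) ∧ ∀ f y, P f y = h y * f (φ y) ^ n := by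
  obtain rfl : P = fun f ↦ L fun _ ↦ f := funext hPL
  have : NeZero n := ⟨hn.ne'⟩
  have hpow : FactorsThroughPow n fun f ↦ L fun _ ↦ f := by
    simpa using IsOrthPolar.factorsThroughPow ⟨hsymm, horth⟩
  have hcont : Continuous fun f ↦ L fun _ ↦ f := by fun_prop
  choose ψ c hc hψ using exists_norm_eq_one_forall_isPeakAt hpow hn.ne' hiso
  have hψ' (x : X) := map_apply_eq_mul_pow hcont hpow hn.ne' (hψ x)
  obtain ⟨Ψ, rfl⟩ := hreg.exists_homeomorph L.map_zero hn.ne' (ψ := ψ) fun f x ↦ by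
    simp [hψ', hc]
  have rep (f y) : L (fun _ ↦ f) y = c (Ψ.symm y) * f (Ψ.symm y) ^ n := by
    rw [← hψ', Ψ.apply_symm_apply]
  exact ⟨c ∘ Ψ.symm, Ψ.symm, hreg.continuous_of_map_apply_eq_mul_pow Ψ.symm.continuous rep,
    fun y ↦ hc _, rep⟩

/-- Banach–Stone for `n`-isometries: an orthogonally additive
`n`-homogeneous polynomial `P : C₀(X) → C₀(Y)` which is an `n`-isometry on positive
elements and has regular range is of the form `P(f)(y) = h(y)(f(φ(y)))ⁿ` for a
continuous unimodular `h` and a homeomorphism `φ : Y → X`. -/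
theorem stmt_18 {X Y : Type*} [TopologicalSpace X] [LocallyCompactSpace X] [T2Space X]
    [TopologicalSpace Y] [LocallyCompactSpace Y] [T2Space Y]
    (n : ℕ) (hn : 0 < n) (P : C₀(X, ℂ) → C₀(Y, ℂ)) (hP : IsHomogPolynomial n P)
    (horth : ∀ f g : C₀(X, ℂ), f * g = 0 → P (f + g) = P f + P g)
    (hiso : ∀ f : C₀(X, ℂ), (∀ x, 0 ≤ f x) → ‖P f‖ = ‖f‖ ^ n)
    (hreg : ∀ (Y₀ : Set Y), IsClosed Y₀ → ∀ y ∉ Y₀,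
      ∃ g ∈ Set.range P, (∀ z ∈ Y₀, g z = 0) ∧ g y ≠ 0) :
    ∃ (h : Y → ℂ) (φ : Y ≃ₜ X),
      Continuous h ∧ (∀ y, ‖h y‖ = 1) ∧
      ∀ (f : C₀(X, ℂ)) (y : Y), P f y = h y * (f (φ y)) ^ n := by
  obtain ⟨L, hsymm, hPL⟩ := hP
  refine stmt_18_general hn L hsymm hPL horth hiso fun Y₀ hY₀ y hy ↦ ?_
  obtain ⟨_, ⟨f, rfl⟩, hf, hfy⟩ := hreg Y₀ hY₀ y hy
  exact ⟨f, hf, hfy⟩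
end
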